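/- arXiv:2605.27833 — 2 statements merged into one kernel-verified Lean document; each statement's English description precedes it below -/
import Mathlib

section
/- There exists ε₀ > 0 such that for every ε ∈ (0, ε₀) there exist a constant C_ε and a threshold q₀(ε) with the following property. Let q ≥ q₀ be a natural number, let K ≥ 0 be an integer with K ≤ min{log q, (1/4)·log M}, and let H, M, N ≥ 1 be real numbers with N ≥ M⁴ ≥ q^{ε} and H ≤ q^{ε/20}. Set ℐ := ⋃_{|k| ≤ 2K+1} (M e^{k − 1/H}, M e^{k}]. Then for all complex numbers (α_{ℓ,m}) with |α_{ℓ,m}| ≤ 1: (1/φ(q)) · ∑_{χ (mod q)} |∑_{ℓ m ≤ N, m ∈ ℐ, gcd(ℓ, P(q^{ε})) = 1} α_{ℓ,m} · conj(χ)(ℓ m)|² ≤ C_ε · (φ(q)/q) · (N + N²/q) · (1/H). -/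
/-!
By orthogonality of characters, and since `|α| ≤ 1`, the mean square is at most the number of
quadruples `(l, m, l', m')` with `l m ≡ l' m'` in a reduced residue class modulo `q`, where `l, l'`
have no prime factor below `q ^ ε` and `m, m' ∈ ℐ` (`mean_square_le_card`). This number is at most
the number of pairs `(l, m)` with `l m` coprime to `q`, times the maximal number of pairs in a
reduced residue class. The two factors are `≪ N φ(q) / (q H)` and `≪ N / q + 1`.

For the first factor, fix `m`. The Selberg sieve of level `R = q ^ (ε / 32)` bounds the number of
rough `l ≤ N / m` by `≪ (N / m) / log R` (`card_rough_modEq_le`), so the sum of `1 / m` over the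
`m ∈ ℐ` coprime to `q` remains. Each of the `O(K + 1)` short intervals has length at least
`q ^ (ε / 20)`, and it contributes `≪ φ(q) / (q H)`: sieving by the primes `p ≪ log q` dividing `q`
is exact over complete periods, and the larger primes dividing `q` are too few to matter
(`card_coprime_interval_le`, `sum_inv_shortUnion_le`). The factor `K + 1 ≪ log q` is absorbed by
`log R`.

For the second factor there are two ranges. If `N ≤ q ^ 4`, each `n ≤ N` has `O_ε(1)` rough
divisors, and a residue class contains at most `N / q + 1` integers `n ≤ N`
(`card_pairs_le_of_small`). If `N ≥ q ^ 4`, the progression modulo `q` is long enough for the Selberg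
sieve, which gives `≪ (N / m) / (φ(q) log R)` values `l` for each `m`, and the bound for the sum of
`1 / m` applies again (`card_pairs_modEq_le`).

The Selberg sieve is proved with the classical optimal weights `selWeight`. The main term is
controlled through `selG k R ≥ (φ(k) / (2 k)) log R` (`totient_div_mul_log_le_selG`), which follows
by removing from the sum over squarefree `d ≤ R` the multiples of each prime dividing `k`.
-/

open scoped BigOperators Classical

noncomputable section

/-- `P(z)`: the product of all primes `p < z`. -/
def primorialLT (z : ℝ) : ℕ :=
  ∏ p ∈ (Finset.range ⌈z⌉₊).filter Nat.Prime, p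

/-- Membership of `m` in `ℐ = ⋃_{|k| ≤ 2K+1} (M e^(k-1/H), M e^k]`. -/
def inShortUnion (M H : ℝ) (K : ℕ) (m : ℕ) : Prop :=
  ∃ k : ℤ, |k| ≤ 2 * (K : ℤ) + 1 ∧ M * Real.exp ((k : ℝ) - 1 / H) < (m : ℝ) ∧
    (m : ℝ) ≤ M * Real.exp (k : ℝ)

/-! ### The support of the sieve weights -/

/-- The squarefree `d ≤ R` coprime to `k`: the support of the Selberg weights. -/
def selSupp (k R : ℕ) : Finset ℕ :=
  (Finset.Icc 1 R).filter (fun d => Squarefree d ∧ d.Coprime k)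

/-- The Selberg sum `∑ 1 / φ(d)` over squarefree `d ≤ R` coprime to `k`. -/
def selG (k R : ℕ) : ℝ := ∑ d ∈ selSupp k R, 1 / (Nat.totient d : ℝ)

/-- The Selberg weights, normalised by `selWeight k R 1 = 1`. -/
def selWeight (k R d : ℕ) : ℝ :=
  (d : ℝ) * (ArithmeticFunction.moebius d : ℝ) / selG k R *
    ∑ h ∈ (selSupp k R).filter (fun h => d ∣ h), 1 / (Nat.totient h : ℝ)

lemma mem_selSupp {k R d : ℕ} :
    d ∈ selSupp k R ↔ (1 ≤ d ∧ d ≤ R) ∧ Squarefree d ∧ d.Coprime k := by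
  simp [selSupp]

lemma one_mem_selSupp {k R : ℕ} (hR : 1 ≤ R) : 1 ∈ selSupp k R := by
  simp [mem_selSupp, hR]

lemma dvd_mem_selSupp {k R d h : ℕ} (hh : h ∈ selSupp k R) (hd : d ∣ h) :
    d ∈ selSupp k R := by
  rw [mem_selSupp] at hh ⊢
  exact ⟨⟨Nat.pos_of_dvd_of_pos hd hh.1.1, (Nat.le_of_dvd hh.1.1 hd).trans hh.1.2⟩,
    hh.2.1.squarefree_of_dvd hd, hh.2.2.coprime_dvd_left hd⟩

lemma selG_pos {k R : ℕ} (hR : 1 ≤ R) : 0 < selG k R := by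
  refine Finset.sum_pos (fun d hd => ?_) ⟨1, one_mem_selSupp hR⟩
  have := Nat.totient_pos.2 (mem_selSupp.1 hd).1.1
  positivity

lemma selWeight_one {k R : ℕ} (hR : 1 ≤ R) : selWeight k R 1 = 1 := by
  have h := (selG_pos (k := k) hR).ne'
  have e : ∑ h ∈ (selSupp k R).filter (fun h => 1 ∣ h), 1 / (Nat.totient h : ℝ) = selG k R := by
    simp [selG]
  rw [selWeight, e]
  simp [h]

lemma abs_selWeight_le {k R : ℕ} (hR : 1 ≤ R) (d : ℕ) : |selWeight k R d| ≤ d := by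
  have hG := selG_pos (k := k) hR
  have h0 : 0 ≤ ∑ h ∈ (selSupp k R).filter (fun h => d ∣ h), 1 / (Nat.totient h : ℝ) :=
    Finset.sum_nonneg fun _ _ => by positivity
  have h1 : ∑ h ∈ (selSupp k R).filter (fun h => d ∣ h), 1 / (Nat.totient h : ℝ) ≤ selG k R :=
    Finset.sum_le_sum_of_subset_of_nonneg (Finset.filter_subset _ _) fun _ _ _ => by positivity
  have hm : |(ArithmeticFunction.moebius d : ℝ)| ≤ 1 := by
    exact_mod_cast ArithmeticFunction.abs_moebius_le_one (n := d)
  rw [selWeight, abs_mul, abs_div, abs_mul, abs_of_pos hG, abs_of_nonneg h0, Nat.abs_cast,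
    div_mul_eq_mul_div, div_le_iff₀ hG]
  have : (d : ℝ) * |(ArithmeticFunction.moebius d : ℝ)| ≤ d := by
    nlinarith [Nat.cast_nonneg (α := ℝ) d]
  gcongr

/-- Möbius inversion over the divisors of a squarefree number lying above a given `g`. -/
lemma sum_moebius_between {h : ℕ} (hh : Squarefree h) (g : ℕ) :
    ∑ d ∈ h.divisors.filter (fun d => g ∣ d), (ArithmeticFunction.moebius d : ℝ) =
      if h = g then (ArithmeticFunction.moebius g : ℝ) else 0 := by
  have h0 : h ≠ 0 := hh.ne_zero
  by_cases hg : g ∣ h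
  · obtain ⟨t, rfl⟩ := hg
    have hg0 : g ≠ 0 := left_ne_zero_of_mul h0
    have ht0 : t ≠ 0 := right_ne_zero_of_mul h0
    have e : (g * t).divisors.filter (fun d => g ∣ d) = t.divisors.image (fun e => g * e) := by
      ext d
      simp only [Finset.mem_filter, Nat.mem_divisors, Finset.mem_image]
      constructor
      · rintro ⟨⟨hd, -⟩, e, rfl⟩
        exact ⟨e, ⟨Nat.dvd_of_mul_dvd_mul_left (Nat.pos_of_ne_zero hg0) hd, ht0⟩, rfl⟩
      · rintro ⟨e, ⟨he, -⟩, rfl⟩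
        exact ⟨⟨Nat.mul_dvd_mul_left g he, h0⟩, dvd_mul_right _ _⟩
    rw [e, Finset.sum_image (fun a _ b _ hab => Nat.eq_of_mul_eq_mul_left
      (Nat.pos_of_ne_zero hg0) hab)]
    have e2 : ∀ e ∈ t.divisors, (ArithmeticFunction.moebius (g * e) : ℝ) =
        (ArithmeticFunction.moebius g : ℝ) * (ArithmeticFunction.moebius e : ℝ) := by
      intro e he
      have hsq : Squarefree (g * e) :=
        hh.squarefree_of_dvd (Nat.mul_dvd_mul_left g (Nat.dvd_of_mem_divisors he))
      rw [ArithmeticFunction.isMultiplicative_moebius.map_mul_of_coprime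
        (Nat.coprime_of_squarefree_mul hsq)]
      push_cast; rfl
    rw [Finset.sum_congr rfl e2, ← Finset.mul_sum]
    have e3 : ∑ e ∈ t.divisors, (ArithmeticFunction.moebius e : ℝ) = if t = 1 then 1 else 0 := by
      have := congrArg (fun f : ArithmeticFunction ℝ => f t)
        (ArithmeticFunction.coe_zeta_mul_coe_moebius (R := ℝ))
      simp only [ArithmeticFunction.coe_zeta_mul_apply, ArithmeticFunction.one_apply] at this
      exact this
    rw [e3]
    have : g * t = g ↔ t = 1 := by
      constructor
      · intro h; exact Nat.eq_of_mul_eq_mul_left (Nat.pos_of_ne_zero hg0) (by simpa using h)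
      · rintro rfl; simp
    simp [this]
  · rw [if_neg (by rintro rfl; exact hg dvd_rfl), Finset.sum_eq_zero]
    intro d hd
    simp only [Finset.mem_filter, Nat.mem_divisors] at hd
    exact absurd (hd.2.trans hd.1.1) hg

/-- The weights diagonalise: this is the optimal choice of the new variables in the
quadratic form `∑ φ(g) y_g ^ 2` subject to `∑ μ(g) y_g = 1`. -/
lemma sum_selWeight_div {k R g : ℕ} (hg : g ∈ selSupp k R) :
    ∑ d ∈ (selSupp k R).filter (fun d => g ∣ d), selWeight k R d / d =
      (ArithmeticFunction.moebius g : ℝ) / (Nat.totient g * selG k R) := by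
  have e1 : ∀ d ∈ (selSupp k R).filter (fun d => g ∣ d), selWeight k R d / d =
      ∑ h ∈ selSupp k R, if d ∣ h then
        (ArithmeticFunction.moebius d : ℝ) * (1 / selG k R * (1 / (Nat.totient h : ℝ))) else 0 := by
    intro d hd
    have hd0 : (d : ℝ) ≠ 0 := by
      have := (mem_selSupp.1 (Finset.mem_filter.1 hd).1).1.1
      positivity
    rw [← Finset.sum_filter, ← Finset.mul_sum, ← Finset.mul_sum, selWeight]
    field_simp
  rw [Finset.sum_congr rfl e1, Finset.sum_comm]
  have e2 : ∀ h ∈ selSupp k R, (∑ d ∈ (selSupp k R).filter (fun d => g ∣ d), if d ∣ h then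
        (ArithmeticFunction.moebius d : ℝ) * (1 / selG k R * (1 / (Nat.totient h : ℝ))) else 0) =
      if h = g then (ArithmeticFunction.moebius g : ℝ) / (Nat.totient g * selG k R) else 0 := by
    intro h hh
    rw [← Finset.sum_filter, ← Finset.sum_mul]
    have e : ((selSupp k R).filter (fun d => g ∣ d)).filter (fun d => d ∣ h) =
        h.divisors.filter (fun d => g ∣ d) := by
      ext d
      simp only [Finset.mem_filter, Nat.mem_divisors]
      constructor
      · rintro ⟨⟨_, h2⟩, h3⟩
        exact ⟨⟨h3, (mem_selSupp.1 hh).2.1.ne_zero⟩, h2⟩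
      · rintro ⟨⟨h3, _⟩, h2⟩
        exact ⟨⟨dvd_mem_selSupp hh h3, h2⟩, h3⟩
    rw [e, sum_moebius_between (mem_selSupp.1 hh).2.1]
    split_ifs with hgh
    · subst hgh
      rw [one_div_mul_one_div, mul_one_div, mul_comm (selG k R)]
    · simp
  rw [Finset.sum_congr rfl e2, Finset.sum_ite_eq' _ _ _, if_pos hg]

/-- The quadratic form of the Selberg sieve takes the value `1 / G`. -/
lemma selWeight_quadratic {k R : ℕ} (hR : 1 ≤ R) :
    ∑ d ∈ selSupp k R, ∑ e ∈ selSupp k R,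
      selWeight k R d * selWeight k R e / (Nat.lcm d e : ℝ) = 1 / selG k R := by
  have hG := (selG_pos (k := k) hR).ne'
  have e1 : ∀ d ∈ selSupp k R, ∀ e ∈ selSupp k R,
      selWeight k R d * selWeight k R e / (Nat.lcm d e : ℝ) =
      ∑ g ∈ selSupp k R, (Nat.totient g : ℝ) * ((if g ∣ d then selWeight k R d / d else 0) *
        (if g ∣ e then selWeight k R e / e else 0)) := by
    intro d hd e he
    have hd0 : (d : ℝ) ≠ 0 := by have := (mem_selSupp.1 hd).1.1; positivity
    have he0 : (e : ℝ) ≠ 0 := by have := (mem_selSupp.1 he).1.1; positivity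
    have hl0 : (Nat.lcm d e : ℝ) ≠ 0 := by
      have := Nat.lcm_pos (mem_selSupp.1 hd).1.1 (mem_selSupp.1 he).1.1
      positivity
    have hgl : (Nat.gcd d e : ℝ) * (Nat.lcm d e : ℝ) = d * e := by
      exact_mod_cast Nat.gcd_mul_lcm d e
    have hs : ∑ g ∈ selSupp k R, (Nat.totient g : ℝ) *
        ((if g ∣ d then selWeight k R d / d else 0) *
        (if g ∣ e then selWeight k R e / e else 0)) =
        (∑ g ∈ (selSupp k R).filter (fun g => g ∣ d ∧ g ∣ e), (Nat.totient g : ℝ)) *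
          (selWeight k R d / d * (selWeight k R e / e)) := by
      rw [Finset.sum_mul, Finset.sum_filter]
      refine Finset.sum_congr rfl fun g _ => ?_
      by_cases h1 : g ∣ d <;> by_cases h2 : g ∣ e <;> simp [h1, h2]
    have hf : (selSupp k R).filter (fun g => g ∣ d ∧ g ∣ e) = (Nat.gcd d e).divisors := by
      ext g
      simp only [Finset.mem_filter, Nat.mem_divisors, Nat.dvd_gcd_iff]
      constructor
      · rintro ⟨_, h⟩
        exact ⟨h, Nat.gcd_ne_zero_left (by exact_mod_cast hd0)⟩
      · rintro ⟨h, _⟩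
        exact ⟨dvd_mem_selSupp hd h.1, h⟩
    have ht : (∑ g ∈ (Nat.gcd d e).divisors, (Nat.totient g : ℝ)) = (Nat.gcd d e : ℝ) := by
      exact_mod_cast Nat.sum_totient (Nat.gcd d e)
    rw [hs, hf, ht]
    field_simp
    linear_combination (-selWeight k R d * selWeight k R e) * hgl
  rw [Finset.sum_congr rfl fun d hd => Finset.sum_congr rfl fun e he => e1 d hd e he]
  have e2 : ∀ d ∈ selSupp k R, (∑ e ∈ selSupp k R, ∑ g ∈ selSupp k R, (Nat.totient g : ℝ) *
      ((if g ∣ d then selWeight k R d / d else 0) * (if g ∣ e then selWeight k R e / e else 0))) =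
      ∑ g ∈ selSupp k R, (Nat.totient g : ℝ) * ((if g ∣ d then selWeight k R d / d else 0) *
        ∑ e ∈ selSupp k R, (if g ∣ e then selWeight k R e / e else 0)) := by
    intro d _
    rw [Finset.sum_comm]
    simp only [Finset.mul_sum]
  rw [Finset.sum_congr rfl e2, Finset.sum_comm]
  have e3 : ∀ g ∈ selSupp k R, (∑ d ∈ selSupp k R, (Nat.totient g : ℝ) *
      ((if g ∣ d then selWeight k R d / d else 0) *
        ∑ e ∈ selSupp k R, (if g ∣ e then selWeight k R e / e else 0))) =
      1 / (Nat.totient g : ℝ) * (1 / (selG k R * selG k R)) := by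
    intro g hg
    rw [← Finset.mul_sum, ← Finset.sum_mul, ← Finset.sum_filter, sum_selWeight_div hg]
    have hm : (ArithmeticFunction.moebius g : ℝ) * (ArithmeticFunction.moebius g : ℝ) = 1 := by
      have := ArithmeticFunction.moebius_sq_eq_one_of_squarefree (mem_selSupp.1 hg).2.1
      rw [← sq]; exact_mod_cast this
    have : (Nat.totient g : ℝ) ≠ 0 := by
      have := Nat.totient_pos.2 (mem_selSupp.1 hg).1.1
      positivity
    field_simp
    linear_combination hm
  rw [Finset.sum_congr rfl e3, ← Finset.sum_mul]
  change selG k R * _ = _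
  field_simp

/-! ### The sieve upper bound -/

/-- `l` has no prime factor `p ≤ R`. -/
def IsRough (R l : ℕ) : Prop := ∀ p : ℕ, p.Prime → p ≤ R → ¬ p ∣ l

lemma abs_card_modEq_sub_le {r : ℕ} (hr : 0 < r) (n v : ℕ) :
    |(((Finset.Ioc 0 n).filter (fun x => x ≡ v [MOD r])).card : ℝ) - n / r| ≤ 1 := by
  have h := Nat.Ioc_filter_modEq_card 0 n hr v
  have hr' : (0 : ℚ) < r := by exact_mod_cast hr
  have hmono : ⌊(((0 : ℕ) : ℚ) - v) / (r : ℚ)⌋ ≤ ⌊((n : ℚ) - v) / (r : ℚ)⌋ := by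
    apply Int.floor_mono
    gcongr
    simp
  rw [max_eq_left (by linarith)] at h
  have hq : |(((Finset.Ioc 0 n).filter (fun x => x ≡ v [MOD r])).card : ℚ) - n / r| ≤ 1 := by
    have h' : (((Finset.Ioc 0 n).filter (fun x => x ≡ v [MOD r])).card : ℚ) =
        (⌊((n : ℚ) - v) / (r : ℚ)⌋ : ℚ) - (⌊(((0 : ℕ) : ℚ) - v) / (r : ℚ)⌋ : ℚ) := by
      exact_mod_cast h
    have a1 := Int.floor_le (((n : ℚ) - v) / (r : ℚ))
    have a2 := Int.lt_floor_add_one (((n : ℚ) - v) / (r : ℚ))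
    have a3 := Int.floor_le ((((0 : ℕ) : ℚ) - v) / (r : ℚ))
    have a4 := Int.lt_floor_add_one ((((0 : ℕ) : ℚ) - v) / (r : ℚ))
    have e : ((n : ℚ) - v) / (r : ℚ) - (((0 : ℕ) : ℚ) - v) / (r : ℚ) = n / r := by
      field_simp; simp
    rw [h', abs_le]
    constructor <;> linarith
  have hr := (Rat.cast_le (K := ℝ)).2 hq
  push_cast at hr
  exact hr

lemma abs_card_modEq_dvd_sub_le {k d : ℕ} (hk : 0 < k) (hd : 0 < d) (hkd : Nat.Coprime k d)
    (n b : ℕ) :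
    |(((Finset.Ioc 0 n).filter (fun x => x ≡ b [MOD k] ∧ d ∣ x)).card : ℝ) -
      n / (k * d)| ≤ 1 := by
  obtain ⟨c, hc1, hc2⟩ := Nat.chineseRemainder hkd b 0
  have e : (Finset.Ioc 0 n).filter (fun x => x ≡ b [MOD k] ∧ d ∣ x) =
      (Finset.Ioc 0 n).filter (fun x => x ≡ c [MOD (k * d)]) := by
    refine Finset.filter_congr fun x _ => ?_
    rw [← Nat.modEq_and_modEq_iff_modEq_mul hkd, ← Nat.modEq_zero_iff_dvd]
    exact and_congr ⟨fun h => h.trans hc1.symm, fun h => h.trans hc1⟩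
      ⟨fun h => h.trans hc2.symm, fun h => h.trans hc2⟩
  rw [e]
  exact_mod_cast abs_card_modEq_sub_le (Nat.mul_pos hk hd) n c

/-- Selberg's upper bound sieve in an arithmetic progression, with a crude error term. -/
lemma selberg_sieve {k R : ℕ} (hk : 0 < k) (hR : 1 ≤ R) (n b : ℕ) :
    (((Finset.Ioc 0 n).filter (fun l => l ≡ b [MOD k] ∧ IsRough R l)).card : ℝ) ≤
      n / (k * selG k R) + (R : ℝ) ^ 4 := by
  set A := (Finset.Ioc 0 n).filter (fun l => l ≡ b [MOD k]) with hA
  set S := selSupp k R with hS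
  set w := selWeight k R with hw
  have hG := selG_pos (k := k) hR
  have step1 : (((Finset.Ioc 0 n).filter (fun l => l ≡ b [MOD k] ∧ IsRough R l)).card : ℝ) ≤
      ∑ l ∈ A, (∑ d ∈ S, if d ∣ l then w d else 0) ^ 2 := by
    rw [← Finset.filter_filter, ← hA, Finset.card_filter]
    push_cast
    refine Finset.sum_le_sum fun l _ => ?_
    split_ifs with hl
    · have : (∑ d ∈ S, if d ∣ l then w d else 0) = 1 := by
        rw [Finset.sum_eq_single_of_mem 1 (one_mem_selSupp hR)]
        · simp [hw, selWeight_one hR]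
        · intro d hd hd1
          rw [if_neg]
          intro hdl
          obtain ⟨p, hp, hpd⟩ := Nat.exists_prime_and_dvd hd1
          have hd' := mem_selSupp.1 hd
          exact hl p hp ((Nat.le_of_dvd hd'.1.1 hpd).trans hd'.1.2) (hpd.trans hdl)
      rw [this]; norm_num
    · positivity
  have step2 : ∑ l ∈ A, (∑ d ∈ S, if d ∣ l then w d else 0) ^ 2 =
      ∑ d ∈ S, ∑ e ∈ S, w d * w e * ((A.filter (fun l => Nat.lcm d e ∣ l)).card : ℝ) := by
    have : ∀ l ∈ A, (∑ d ∈ S, if d ∣ l then w d else 0) ^ 2 =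
        ∑ d ∈ S, ∑ e ∈ S, w d * w e * (if Nat.lcm d e ∣ l then 1 else 0) := by
      intro l _
      rw [sq, Finset.sum_mul_sum]
      refine Finset.sum_congr rfl fun d _ => Finset.sum_congr rfl fun e _ => ?_
      by_cases h1 : d ∣ l <;> by_cases h2 : e ∣ l <;> simp [h1, h2, Nat.lcm_dvd_iff]
    rw [Finset.sum_congr rfl this, Finset.sum_comm]
    refine Finset.sum_congr rfl fun d _ => ?_
    rw [Finset.sum_comm]
    refine Finset.sum_congr rfl fun e _ => ?_
    rw [← Finset.mul_sum, Finset.card_filter]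
    push_cast; rfl
  have step3 : ∀ d ∈ S, ∀ e ∈ S,
      w d * w e * ((A.filter (fun l => Nat.lcm d e ∣ l)).card : ℝ) ≤
        (n : ℝ) / k * (w d * w e / (Nat.lcm d e : ℝ)) + (R : ℝ) * R := by
    intro d hd e he
    have hd' := mem_selSupp.1 hd
    have he' := mem_selSupp.1 he
    have hl : 0 < Nat.lcm d e := Nat.lcm_pos hd'.1.1 he'.1.1
    have hcop : Nat.Coprime k (Nat.lcm d e) :=
      (Nat.Coprime.mul_right hd'.2.2.symm he'.2.2.symm).coprime_dvd_right (Nat.lcm_dvd_mul d e)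
    have hc := abs_card_modEq_dvd_sub_le hk hl hcop n b
    rw [hA, Finset.filter_filter]
    set c : ℝ := (((Finset.Ioc 0 n).filter
      (fun x => x ≡ b [MOD k] ∧ Nat.lcm d e ∣ x)).card : ℝ)
    have hwd : |w d| ≤ R := (abs_selWeight_le hR d).trans (by exact_mod_cast hd'.1.2)
    have hwe : |w e| ≤ R := (abs_selWeight_le hR e).trans (by exact_mod_cast he'.1.2)
    have key : w d * w e * (c - n / (k * (Nat.lcm d e : ℝ))) ≤ R * R := by
      refine (le_abs_self _).trans ?_
      rw [abs_mul, abs_mul]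
      calc |w d| * |w e| * |c - n / (k * (Nat.lcm d e : ℝ))| ≤ R * R * 1 := by gcongr
        _ = R * R := mul_one _
    have hk0 : (k : ℝ) ≠ 0 := by positivity
    have hl0 : (Nat.lcm d e : ℝ) ≠ 0 := by positivity
    have e2 : (n : ℝ) / k * (w d * w e / (Nat.lcm d e : ℝ)) =
      w d * w e * (n / (k * (Nat.lcm d e : ℝ))) := by field_simp
    rw [e2]; linarith [mul_sub (w d * w e) c (n / (k * (Nat.lcm d e : ℝ)))]
  have hcard : (S.card : ℝ) ≤ R := by
    have : S.card ≤ (Finset.Icc 1 R).card := Finset.card_filter_le _ _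
    exact_mod_cast (by simpa using this : S.card ≤ R)
  calc _ ≤ _ := step1
    _ = _ := step2
    _ ≤ ∑ d ∈ S, ∑ e ∈ S, ((n : ℝ) / k * (w d * w e / (Nat.lcm d e : ℝ)) + (R : ℝ) * R) :=
        Finset.sum_le_sum fun d hd => Finset.sum_le_sum fun e he => step3 d hd e he
    _ = (n : ℝ) / k * (1 / selG k R) + S.card * (S.card * ((R : ℝ) * R)) := by
        rw [← selWeight_quadratic hR]
        simp only [Finset.sum_add_distrib, Finset.mul_sum, Finset.sum_const, nsmul_eq_mul]
        rfl
    _ ≤ (n : ℝ) / k * (1 / selG k R) + R * (R * ((R : ℝ) * R)) := by gcongr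
    _ = _ := by
        have hk0 : (k : ℝ) ≠ 0 := by positivity
        field_simp

/-! ### Lower bound for the Selberg sum -/

/-- Squarefree `d ≤ R` not divisible by any element of `T`. -/
def avoidSupp (T : Finset ℕ) (R : ℕ) : Finset ℕ :=
  (Finset.Icc 1 R).filter (fun d => Squarefree d ∧ ∀ p ∈ T, ¬ p ∣ d)

/-- Each integer is a square times a squarefree number, so the sum over squarefree numbers is
at least `1 / ζ(2)` times the harmonic sum. -/
lemma log_le_two_mul_sum_avoid_empty (R : ℕ) :
    Real.log R ≤ 2 * ∑ d ∈ avoidSupp ∅ R, 1 / (Nat.totient d : ℝ) := by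
  rcases Nat.eq_zero_or_pos R with rfl | hR
  · simp [avoidSupp]
  have h1 : Real.log R ≤ ∑ n ∈ Finset.Icc 1 R, 1 / (n : ℝ) := by
    have h := log_add_one_le_harmonic R
    have h2 : Real.log R ≤ Real.log ((R + 1 : ℕ) : ℝ) :=
      Real.log_le_log (by positivity) (by push_cast; linarith)
    rw [harmonic_eq_sum_Icc] at h
    push_cast at h h2
    simpa [one_div] using h2.trans h
  choose! a b hab using fun n (hn : 0 < n) => Nat.sq_mul_squarefree_of_pos hn
  have h2 : ∑ n ∈ Finset.Icc 1 R, 1 / (n : ℝ) ≤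
      ∑ x ∈ (Finset.Ioo 0 (R + 1)) ×ˢ (avoidSupp ∅ R),
        ((x.1 : ℝ) ^ 2)⁻¹ * (1 / (Nat.totient x.2 : ℝ)) := by
    have hinj : Set.InjOn (fun n => (b n, a n)) (Finset.Icc 1 R : Finset ℕ) := by
      intro n hn m hm h
      simp only [Finset.coe_Icc, Set.mem_Icc] at hn hm
      simp only [Prod.mk.injEq] at h
      rw [← (hab n hn.1).2.2.1, ← (hab m hm.1).2.2.1, h.1, h.2]
    calc ∑ n ∈ Finset.Icc 1 R, 1 / (n : ℝ)
        ≤ ∑ n ∈ Finset.Icc 1 R, ((b n : ℝ) ^ 2)⁻¹ * (1 / (Nat.totient (a n) : ℝ)) := by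
          refine Finset.sum_le_sum fun n hn => ?_
          have hn' := hab n (Finset.mem_Icc.1 hn).1
          have e : (n : ℝ) = (b n : ℝ) ^ 2 * a n := by exact_mod_cast hn'.2.2.1.symm
          have hb : (0 : ℝ) < b n := by exact_mod_cast hn'.2.1
          have hta : (0 : ℝ) < Nat.totient (a n) := by exact_mod_cast Nat.totient_pos.2 hn'.1
          have hta' : (Nat.totient (a n) : ℝ) ≤ a n := by exact_mod_cast Nat.totient_le _
          rw [e, one_div, mul_inv, one_div]
          gcongr
      _ = ∑ x ∈ (Finset.Icc 1 R).image (fun n => (b n, a n)),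
            ((x.1 : ℝ) ^ 2)⁻¹ * (1 / (Nat.totient x.2 : ℝ)) := by
          rw [Finset.sum_image hinj]
      _ ≤ _ := by
          refine Finset.sum_le_sum_of_subset_of_nonneg ?_ fun _ _ _ => by positivity
          intro x hx
          obtain ⟨n, hn, rfl⟩ := Finset.mem_image.1 hx
          rw [Finset.mem_Icc] at hn
          have hn' := hab n hn.1
          have h3 : a n ≤ n := by
            conv_rhs => rw [← hn'.2.2.1]
            exact Nat.le_mul_of_pos_left _ (pow_pos hn'.2.1 2)
          have h4 : b n ≤ n := by
            conv_rhs => rw [← hn'.2.2.1]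
            nlinarith [hn'.1, hn'.2.1, Nat.mul_le_mul hn'.2.1 hn'.1,
              Nat.le_mul_of_pos_right (b n ^ 2) hn'.1]
          simp only [Finset.mem_product, Finset.mem_Ioo, avoidSupp, Finset.mem_filter,
            Finset.mem_Icc]
          refine ⟨⟨hn'.2.1, by lia⟩, ⟨hn'.1, by lia⟩, hn'.2.2.2, by simp⟩
  rw [Finset.sum_product] at h2
  dsimp only at h2
  rw [← Finset.sum_mul_sum] at h2
  have h3 := sum_Ioo_inv_sq_le (α := ℝ) 0 (R + 1)
  have h4 : 0 ≤ ∑ d ∈ avoidSupp ∅ R, 1 / (Nat.totient d : ℝ) :=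
    Finset.sum_nonneg fun _ _ => by positivity
  refine h1.trans (h2.trans ?_)
  gcongr
  simpa using h3

/-- Removing the multiples of one prime costs at most a factor `1 - 1 / p`. -/
lemma sum_avoid_insert {T : Finset ℕ} {p : ℕ} (hp : p.Prime) (R : ℕ) :
    (1 - 1 / (p : ℝ)) * ∑ d ∈ avoidSupp T R, 1 / (Nat.totient d : ℝ) ≤
      ∑ d ∈ avoidSupp (insert p T) R, 1 / (Nat.totient d : ℝ) := by
  set G := ∑ d ∈ avoidSupp T R, 1 / (Nat.totient d : ℝ) with hG
  set G' := ∑ d ∈ avoidSupp (insert p T) R, 1 / (Nat.totient d : ℝ) with hG'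
  have hp1 : (1 : ℝ) < p := by exact_mod_cast hp.one_lt
  have hsplit := Finset.sum_filter_add_sum_filter_not (avoidSupp T R) (fun d => p ∣ d)
    (fun d => 1 / (Nat.totient d : ℝ))
  have e1 : (avoidSupp T R).filter (fun d => ¬ p ∣ d) = avoidSupp (insert p T) R := by
    ext d
    simp only [avoidSupp, Finset.mem_filter, Finset.forall_mem_insert]
    tauto
  have e2 : ∑ d ∈ (avoidSupp T R).filter (fun d => p ∣ d), 1 / (Nat.totient d : ℝ) ≤
      1 / ((p : ℝ) - 1) * G' := by
    have hsub : (avoidSupp T R).filter (fun d => p ∣ d) ⊆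
        (avoidSupp (insert p T) R).image (fun e => p * e) := by
      intro d hd
      simp only [avoidSupp, Finset.mem_filter, Finset.mem_Icc] at hd
      obtain ⟨⟨⟨h1, h2⟩, h3, h4⟩, e, rfl⟩ := hd
      have he : 0 < e := Nat.pos_of_ne_zero (by rintro rfl; simp at h1)
      refine Finset.mem_image.2 ⟨e, ?_, rfl⟩
      simp only [avoidSupp, Finset.mem_filter, Finset.mem_Icc, Finset.forall_mem_insert]
      refine ⟨⟨he, (Nat.le_mul_of_pos_left e hp.pos).trans h2⟩, ?_, ?_, ?_⟩
      · exact h3.squarefree_of_dvd (dvd_mul_left _ _)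
      · exact (Nat.Prime.coprime_iff_not_dvd hp).1 (Nat.coprime_of_squarefree_mul h3)
      · exact fun r hr hre => h4 r hr (hre.mul_left _)
    refine (Finset.sum_le_sum_of_subset_of_nonneg hsub fun _ _ _ => by positivity).trans ?_
    rw [Finset.sum_image (fun a _ b _ hab => Nat.eq_of_mul_eq_mul_left hp.pos hab),
      hG', Finset.mul_sum]
    refine Finset.sum_le_sum fun e he => le_of_eq ?_
    simp only [avoidSupp, Finset.mem_filter, Finset.forall_mem_insert] at he
    rw [Nat.totient_mul ((Nat.Prime.coprime_iff_not_dvd hp).2 he.2.2.1), Nat.totient_prime hp]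
    push_cast [hp.one_le]
    rw [one_div_mul_one_div]
  rw [e1, ← hG, ← hG'] at hsplit
  have h5 : G ≤ (1 / ((p : ℝ) - 1) + 1) * G' := by linarith
  have h6 : (1 - 1 / (p : ℝ)) * (1 / ((p : ℝ) - 1) + 1) = 1 := by
    have : (p : ℝ) - 1 ≠ 0 := by linarith
    field_simp
    ring
  have h7 : 0 ≤ 1 - 1 / (p : ℝ) := by
    rw [sub_nonneg, div_le_one (by linarith)]; exact hp1.le
  calc _ ≤ (1 - 1 / (p : ℝ)) * ((1 / ((p : ℝ) - 1) + 1) * G') := by gcongr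
    _ = G' := by rw [← mul_assoc, h6, one_mul]

lemma prod_mul_sum_avoid_le (T : Finset ℕ) (hT : ∀ r ∈ T, r.Prime) (R : ℕ) :
    (∏ p ∈ T, (1 - 1 / (p : ℝ))) * ∑ d ∈ avoidSupp ∅ R, 1 / (Nat.totient d : ℝ) ≤
      ∑ d ∈ avoidSupp T R, 1 / (Nat.totient d : ℝ) := by
  induction T using Finset.induction_on with
  | empty => simp
  | insert p T hpT ih =>
    rw [Finset.forall_mem_insert] at hT
    have hp1 : (1 : ℝ) < p := by exact_mod_cast hT.1.one_lt
    have h7 : 0 ≤ 1 - 1 / (p : ℝ) := by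
      rw [sub_nonneg, div_le_one (by linarith)]; exact hp1.le
    rw [Finset.prod_insert hpT, mul_assoc]
    exact (mul_le_mul_of_nonneg_left (ih hT.2) h7).trans (sum_avoid_insert hT.1 R)

lemma totient_div_eq_prod (k : ℕ) (hk : 0 < k) :
    (Nat.totient k : ℝ) / k = ∏ p ∈ k.primeFactors, (1 - 1 / (p : ℝ)) := by
  have h := Nat.totient_eq_mul_prod_factors k
  have h' : (Nat.totient k : ℝ) = k * ∏ p ∈ k.primeFactors, (1 - (p : ℝ)⁻¹) := by
    have h2 := congrArg (fun x : ℚ => (x : ℝ)) h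
    push_cast at h2
    exact h2
  have : (k : ℝ) ≠ 0 := by positivity
  rw [h', mul_div_cancel_left₀ _ this]
  simp [one_div]

lemma totient_div_mul_log_le_selG {k : ℕ} (hk : 0 < k) (R : ℕ) :
    (Nat.totient k : ℝ) / k * Real.log R ≤ 2 * selG k R := by
  have e : selSupp k R = avoidSupp k.primeFactors R := by
    refine Finset.filter_congr fun d _ => and_congr_right fun _ => ?_
    rw [Nat.coprime_comm]
    constructor
    · intro h p hp hpd
      exact (Nat.prime_of_mem_primeFactors hp).one_lt.ne'
        (Nat.eq_one_of_dvd_coprimes h (Nat.dvd_of_mem_primeFactors hp) hpd)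
    · intro h
      refine Nat.coprime_of_dvd fun p hp hpk => ?_
      exact h p (Nat.mem_primeFactors.2 ⟨hp, hpk, hk.ne'⟩)
  have h1 := log_le_two_mul_sum_avoid_empty R
  have h2 := prod_mul_sum_avoid_le k.primeFactors (fun _ => Nat.prime_of_mem_primeFactors) R
  rw [← totient_div_eq_prod k hk, ← e] at h2
  have h3 : (0 : ℝ) ≤ (Nat.totient k : ℝ) / k := by positivity
  calc _ ≤ (Nat.totient k : ℝ) / k * (2 * ∑ d ∈ avoidSupp ∅ R, 1 / (Nat.totient d : ℝ)) := by
        gcongr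
    _ ≤ 2 * selG k R := by
        have : selG k R = ∑ d ∈ selSupp k R, 1 / (Nat.totient d : ℝ) := rfl
        rw [this]; linarith

/-- Upper bound of the expected order of magnitude for rough numbers in an arithmetic
progression whose length is a large power of the sifting level. -/
lemma card_rough_modEq_le {k R : ℕ} (hk : 0 < k) (hR : 2 ≤ R) (b : ℕ) {X : ℝ}
    (hX : (k : ℝ) * (R : ℝ) ^ 8 ≤ X) :
    (((Finset.Ioc 0 ⌊X⌋₊).filter (fun l => l ≡ b [MOD k] ∧ IsRough R l)).card : ℝ) ≤
      3 * X / (Nat.totient k * Real.log R) := by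
  have hk' : (0 : ℝ) < k := by exact_mod_cast hk
  have hR' : (2 : ℝ) ≤ R := by exact_mod_cast hR
  have hX0 : 0 ≤ X := le_trans (by positivity) hX
  have hL : 0 < Real.log R := Real.log_pos (by linarith)
  have ht : (0 : ℝ) < Nat.totient k := by exact_mod_cast Nat.totient_pos.2 hk
  have htk : (Nat.totient k : ℝ) ≤ k := by exact_mod_cast Nat.totient_le k
  have hG := selG_pos (k := k) (R := R) (by lia)
  have h1 := selberg_sieve hk (by lia : 1 ≤ R) ⌊X⌋₊ b
  have h2 := totient_div_mul_log_le_selG hk R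
  have h3 : (⌊X⌋₊ : ℝ) / (k * selG k R) ≤ 2 * X / (Nat.totient k * Real.log R) := by
    rw [div_le_div_iff₀ (by positivity) (by positivity)]
    have h4 : (Nat.totient k : ℝ) * Real.log R ≤ 2 * (k * selG k R) := by
      rw [div_mul_eq_mul_div, div_le_iff₀ hk'] at h2
      linarith
    calc (⌊X⌋₊ : ℝ) * (Nat.totient k * Real.log R) ≤ X * (2 * (k * selG k R)) :=
          mul_le_mul (Nat.floor_le hX0) h4 (by positivity) hX0
      _ = _ := by ring
  have h5 : (R : ℝ) ^ 4 ≤ X / (Nat.totient k * Real.log R) := by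
    rw [le_div_iff₀ (by positivity)]
    have hlog : Real.log R ≤ (R : ℝ) ^ 4 := by
      have := Real.log_le_sub_one_of_pos (show (0 : ℝ) < R by linarith)
      have h6 : (R : ℝ) ^ 1 ≤ (R : ℝ) ^ 4 := pow_le_pow_right₀ (by linarith) (by norm_num)
      linarith
    calc (R : ℝ) ^ 4 * (Nat.totient k * Real.log R) ≤ (R : ℝ) ^ 4 * (k * (R : ℝ) ^ 4) := by
          gcongr
      _ = k * (R : ℝ) ^ 8 := by ring
      _ ≤ X := hX
  calc _ ≤ _ := h1
    _ ≤ 2 * X / (Nat.totient k * Real.log R) + X / (Nat.totient k * Real.log R) := add_le_add h3 h5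
    _ = _ := by ring

/-! ### Integers coprime to `q` in short intervals -/

lemma exp_neg_le_one_sub_inv {p w : ℝ} (hw : 0 < w) (hp : w + 1 ≤ p) :
    Real.exp (-(1 / w)) ≤ 1 - 1 / p := by
  have h1 : 1 / w + 1 ≤ Real.exp (1 / w) := Real.add_one_le_exp _
  have hw1 : 0 < 1 / w + 1 := by positivity
  rw [Real.exp_neg]
  calc (Real.exp (1 / w))⁻¹ ≤ (1 / w + 1)⁻¹ := by gcongr
    _ = 1 - 1 / (w + 1) := by field_simp; ring
    _ ≤ 1 - 1 / p := by gcongr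

lemma card_primeFactors_le_log {q : ℕ} (hq : 0 < q) :
    (q.primeFactors.card : ℝ) ≤ 2 * Real.log q := by
  have h1 : 2 ^ q.primeFactors.card ≤ q :=
    (Finset.pow_card_le_prod q.primeFactors (fun p => p) 2
      fun p hp => (Nat.prime_of_mem_primeFactors hp).two_le).trans
      (Nat.le_of_dvd hq (Nat.prod_primeFactors_dvd q))
  have h2 : Real.log ((2 : ℝ) ^ q.primeFactors.card) ≤ Real.log q :=
    Real.log_le_log (by positivity) (by exact_mod_cast h1)
  rw [Real.log_pow] at h2
  have h3 := Real.log_two_gt_d9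
  have h4 : (0 : ℝ) ≤ q.primeFactors.card := Nat.cast_nonneg _
  nlinarith

/-- An interval of length `y ≥ q ^ δ` contains `O_δ(φ(q) / q * y)` integers coprime to `q`.
Only the primes `p ≤ w` with `w ≍ δ log q` need to be sieved out: their product is at most
`4 ^ w ≤ q ^ δ`, so counting over complete periods suffices, and the other prime factors of `q`
change `φ(q) / q` by a bounded factor only. -/
lemma card_coprime_interval_le {δ : ℝ} (hδ : 0 < δ) {q : ℕ} (hq : 0 < q)
    (hL : 8 / δ ≤ Real.log q) {x y : ℝ} (hx : 0 ≤ x) (hy : (q : ℝ) ^ δ ≤ y) (S : Finset ℕ)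
    (hS : ∀ m ∈ S, x < m ∧ (m : ℝ) ≤ x + y ∧ Nat.Coprime m q) :
    (S.card : ℝ) ≤ 3 * Real.exp (8 / δ) * ((Nat.totient q : ℝ) / q) * y := by
  have hq' : (0 : ℝ) < q := by exact_mod_cast hq
  set L := Real.log q with hLdef
  have hδL : 8 ≤ δ * L := by rw [div_le_iff₀ hδ] at hL; linarith
  set w := ⌊δ / 2 * L⌋₊ with hw
  have hw1 : (w : ℝ) ≤ δ / 2 * L := Nat.floor_le (by nlinarith)
  have hw2 : δ / 4 * L ≤ w := by
    have := Nat.lt_floor_add_one (δ / 2 * L)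
    rw [← hw] at this
    nlinarith
  have hw0 : (0 : ℝ) < w := by nlinarith
  set T := q.primeFactors.filter (fun p => p ≤ w) with hT
  set T' := q.primeFactors.filter (fun p => ¬ p ≤ w) with hT'
  have hTp : ∀ p ∈ T, p.Prime := fun p hp =>
    Nat.prime_of_mem_primeFactors (Finset.mem_filter.1 hp).1
  set r := ∏ p ∈ T, p with hr
  have hr0 : 0 < r := Finset.prod_pos fun p hp => (hTp p hp).pos
  have hrp : r.primeFactors = T := Nat.primeFactors_prod hTp
  have hrq : r ∣ q := (Finset.prod_dvd_prod_of_subset _ _ _ (Finset.filter_subset _ _)).trans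
    (Nat.prod_primeFactors_dvd q)
  have hrw : r ≤ 4 ^ w := by
    refine le_trans ?_ (primorial_le_four_pow w)
    refine Nat.le_of_dvd (primorial_pos w) ?_
    refine Finset.prod_dvd_prod_of_subset _ _ _ fun p hp => ?_
    have h1 := hTp p hp
    have h2 := (Finset.mem_filter.1 hp).2
    simp [h1, Nat.lt_succ_of_le h2]
  have hry : (r : ℝ) ≤ y := by
    refine le_trans ?_ hy
    have h4 : Real.log 4 ≤ 2 := by
      have : (4 : ℝ) = 2 ^ 2 := by norm_num
      rw [this, Real.log_pow]
      have := Real.log_two_lt_d9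
      push_cast; linarith
    calc (r : ℝ) ≤ 4 ^ w := by exact_mod_cast hrw
      _ = Real.exp (Real.log 4 * w) := by
          rw [mul_comm, Real.exp_nat_mul, Real.exp_log (by norm_num)]
      _ ≤ Real.exp (L * δ) := Real.exp_le_exp.2 (by
          have := mul_le_mul_of_nonneg_right h4 hw0.le
          linarith)
      _ = (q : ℝ) ^ δ := (Real.rpow_def_of_pos hq' δ).symm
  have hy1 : 1 ≤ y := le_trans (by exact_mod_cast hr0) hry
  have hcard : (S.card : ℝ) ≤ 3 * ((Nat.totient r : ℝ) / r) * y := by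
    have h1 : S ⊆ (Finset.Ico (⌊x⌋₊ + 1) (⌊x⌋₊ + 1 + (⌊y⌋₊ + 1))).filter
        (fun m => r.Coprime m) := by
      intro m hm
      obtain ⟨a1, a2, a3⟩ := hS m hm
      have b1 := Nat.lt_floor_add_one x
      have b2 := Nat.lt_floor_add_one y
      refine Finset.mem_filter.2 ⟨Finset.mem_Ico.2 ⟨?_, ?_⟩, ?_⟩
      · exact Nat.succ_le_of_lt ((Nat.floor_lt hx).2 a1)
      · have : (m : ℝ) < ((⌊x⌋₊ + 1 + (⌊y⌋₊ + 1) : ℕ) : ℝ) := by push_cast; linarith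
        exact_mod_cast this
      · exact (a3.symm).coprime_dvd_left hrq
    have h2 := (Finset.card_le_card h1).trans
      (Nat.Ico_filter_coprime_le (⌊x⌋₊ + 1) (⌊y⌋₊ + 1) hr0.ne')
    have h3 : (((⌊y⌋₊ + 1) / r : ℕ) : ℝ) ≤ (y + 1) / r := by
      refine Nat.cast_div_le.trans ?_
      have := Nat.floor_le (show 0 ≤ y by linarith)
      push_cast
      gcongr
    have hr0' : (0 : ℝ) < r := by exact_mod_cast hr0
    calc (S.card : ℝ) ≤ (Nat.totient r : ℝ) * ((((⌊y⌋₊ + 1) / r : ℕ) : ℝ) + 1) := by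
          exact_mod_cast h2
      _ ≤ (Nat.totient r : ℝ) * ((y + 1) / r + 1) := by gcongr
      _ = (Nat.totient r : ℝ) / r * (y + 1 + r) := by field_simp
      _ ≤ (Nat.totient r : ℝ) / r * (3 * y) := by gcongr; linarith
      _ = _ := by ring
  have hsplit : (Nat.totient q : ℝ) / q =
      (Nat.totient r : ℝ) / r * ∏ p ∈ T', (1 - 1 / (p : ℝ)) := by
    rw [totient_div_eq_prod q hq, totient_div_eq_prod r hr0, hrp,
      Finset.prod_filter_mul_prod_filter_not]
  have htail : Real.exp (-(8 / δ)) ≤ ∏ p ∈ T', (1 - 1 / (p : ℝ)) := by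
    have h1 : ∏ _p ∈ T', Real.exp (-(1 / (w : ℝ))) ≤ ∏ p ∈ T', (1 - 1 / (p : ℝ)) := by
      refine Finset.prod_le_prod (fun _ _ => (Real.exp_pos _).le) fun p hp => ?_
      refine exp_neg_le_one_sub_inv hw0 ?_
      have := not_le.1 (Finset.mem_filter.1 hp).2
      exact_mod_cast this
    refine le_trans ?_ h1
    rw [Finset.prod_const, ← Real.exp_nat_mul]
    refine Real.exp_le_exp.2 ?_
    have h2 : (T'.card : ℝ) ≤ 2 * L :=
      le_trans (by exact_mod_cast Finset.card_filter_le _ _) (card_primeFactors_le_log hq)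
    rw [mul_neg, neg_le_neg_iff, mul_one_div, div_le_div_iff₀ hw0 hδ]
    nlinarith
  have h1 : 1 ≤ Real.exp (8 / δ) * ∏ p ∈ T', (1 - 1 / (p : ℝ)) := by
    have := mul_le_mul_of_nonneg_left htail (Real.exp_pos (8 / δ)).le
    rwa [← Real.exp_add, add_neg_cancel, Real.exp_zero] at this
  calc (S.card : ℝ) ≤ 3 * ((Nat.totient r : ℝ) / r) * y * 1 := by rw [mul_one]; exact hcard
    _ ≤ 3 * ((Nat.totient r : ℝ) / r) * y *
        (Real.exp (8 / δ) * ∏ p ∈ T', (1 - 1 / (p : ℝ))) := by gcongr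
    _ = _ := by rw [hsplit]; ring

/-- The logarithmic density of the integers of `ℐ` coprime to `q`. -/
lemma sum_inv_shortUnion_le {ε : ℝ} (hε : 0 < ε) {q : ℕ} (hq : 0 < q)
    (hL : 160 / ε ≤ Real.log q) {K : ℕ} {H M : ℝ} (hH : 1 ≤ H) (hM : 1 ≤ M)
    (hK : (K : ℝ) ≤ 1 / 4 * Real.log M) (hqM : (q : ℝ) ^ ε ≤ M ^ (4 : ℕ))
    (hHq : H ≤ (q : ℝ) ^ (ε / 20)) (S : Finset ℕ)
    (hS : ∀ m ∈ S, inShortUnion M H K m ∧ Nat.Coprime m q) :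
    ∑ m ∈ S, 1 / (m : ℝ) ≤
      36 * Real.exp (160 / ε) * ((Nat.totient q : ℝ) / q) * ((K + 1) / H) := by
  have hq' : (0 : ℝ) < q := by exact_mod_cast hq
  have hM0 : 0 < M := by linarith
  have hH0 : 0 < H := by linarith
  set L := Real.log q with hLdef
  have hεL : 160 ≤ ε * L := by rw [div_le_iff₀ hε] at hL; linarith
  set t := 1 / H with ht
  have ht0 : 0 < t := by positivity
  have ht1 : t ≤ 1 := by rw [ht, div_le_one hH0]; exact hH
  have hlogM : ε * L ≤ 4 * Real.log M := by
    have := Real.log_le_log (by positivity) hqM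
    rw [Real.log_rpow hq', Real.log_pow] at this
    exact_mod_cast this
  have hlogH : Real.log H ≤ ε / 20 * L := by
    have := Real.log_le_log hH0 hHq
    rwa [Real.log_rpow hq'] at this
  set J := Finset.Icc (-(2 * (K : ℤ) + 1)) (2 * (K : ℤ) + 1) with hJ
  set P : ℤ → ℕ → Prop := fun k m => M * Real.exp ((k : ℝ) - t) < (m : ℝ) ∧
    (m : ℝ) ≤ M * Real.exp (k : ℝ) with hP
  set B := 9 * Real.exp (160 / ε) * ((Nat.totient q : ℝ) / q) * t with hB
  have hone : ∀ k ∈ J, ∑ m ∈ S.filter (P k), 1 / (m : ℝ) ≤ B := by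
    intro k hk
    have hk1 : -(2 * (K : ℝ) + 1) ≤ k := by exact_mod_cast (Finset.mem_Icc.1 hk).1
    set x := M * Real.exp ((k : ℝ) - t) with hx
    have hx0 : 0 < x := by positivity
    set y := M * Real.exp (k : ℝ) - x with hy
    have hyx : y = x * (Real.exp t - 1) := by
      rw [hy, hx, mul_sub, mul_assoc, ← Real.exp_add]; simp
    have hyx3 : y ≤ x * (3 * t) := by
      rw [hyx]
      gcongr
      have h1 : 1 - t ≤ Real.exp (-t) := by
        have := Real.add_one_le_exp (-t); linarith
      have h2 : Real.exp t * Real.exp (-t) = 1 := by rw [← Real.exp_add]; simp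
      have h3 : Real.exp t ≤ 3 := (Real.exp_le_exp.2 ht1).trans
        (by have := Real.exp_one_lt_d9; linarith)
      have h4 := Real.exp_pos t
      nlinarith
    have hylow : (q : ℝ) ^ (ε / 20) ≤ y := by
      have h1 : t / 2 ≤ 1 - Real.exp (-t) := by
        have h2 : Real.exp (-t) ≤ (1 + t)⁻¹ := by
          rw [Real.exp_neg]
          have := Real.add_one_le_exp t
          gcongr
          linarith
        have h3 : (1 + t)⁻¹ ≤ 1 - t / 2 := by
          rw [inv_le_iff_one_le_mul₀ (by linarith)]
          nlinarith
        linarith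
      have h2 : y = M * Real.exp k * (1 - Real.exp (-t)) := by
        rw [hy, hx, sub_eq_add_neg (k : ℝ) t, Real.exp_add]; ring
      have h3 : M * Real.exp k * (t / 2) ≤ y := by rw [h2]; gcongr
      refine le_trans ?_ h3
      have e : M * Real.exp k * (t / 2) =
          Real.exp (Real.log M + k - Real.log H - Real.log 2) := by
        rw [Real.exp_sub, Real.exp_sub, Real.exp_add, Real.exp_log hM0, Real.exp_log hH0,
          Real.exp_log (by norm_num), ht]
        field_simp
      rw [e, Real.rpow_def_of_pos hq']
      refine Real.exp_le_exp.2 ?_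
      have := Real.log_two_lt_d9
      linarith
    have hcard := card_coprime_interval_le (δ := ε / 20) (by positivity) hq
      (by rw [← hLdef]; convert hL using 1; field_simp; norm_num) hx0.le hylow
      (S.filter (P k)) (by
        intro m hm
        obtain ⟨hm1, hm2⟩ := Finset.mem_filter.1 hm
        exact ⟨hm2.1, by rw [hy]; linarith [hm2.2], (hS m hm1).2⟩)
    have e160 : 8 / (ε / 20) = 160 / ε := by field_simp; norm_num
    rw [e160] at hcard
    calc ∑ m ∈ S.filter (P k), 1 / (m : ℝ) ≤ ∑ _m ∈ S.filter (P k), 1 / x := by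
          refine Finset.sum_le_sum fun m hm => ?_
          have := (Finset.mem_filter.1 hm).2.1
          gcongr
      _ = ((S.filter (P k)).card : ℝ) / x := by
          rw [Finset.sum_const, nsmul_eq_mul, mul_one_div]
      _ ≤ B := by
          rw [div_le_iff₀ hx0]
          refine hcard.trans ?_
          calc _ ≤ 3 * Real.exp (160 / ε) * ((Nat.totient q : ℝ) / q) * (x * (3 * t)) := by
                gcongr
            _ = _ := by rw [hB]; ring
  have hJc : (J.card : ℝ) ≤ 4 * (K + 1) := by
    have : J.card = 4 * K + 3 := by
      rw [hJ, Int.card_Icc]; lia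
    rw [this]; push_cast; linarith
  have hB0 : 0 ≤ B := by positivity
  calc ∑ m ∈ S, 1 / (m : ℝ) ≤ ∑ m ∈ S, ∑ k ∈ J, if P k m then 1 / (m : ℝ) else 0 := by
        refine Finset.sum_le_sum fun m hm => ?_
        obtain ⟨⟨k, hk1, hk2⟩, -⟩ := hS m hm
        have hkJ : k ∈ J := Finset.mem_Icc.2 (abs_le.1 hk1)
        have hPk : P k m := hk2
        calc 1 / (m : ℝ) = if P k m then 1 / (m : ℝ) else 0 := by rw [if_pos hPk]
          _ ≤ _ := Finset.single_le_sum (f := fun k => if P k m then 1 / (m : ℝ) else 0)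
              (fun k _ => by positivity) hkJ
    _ = ∑ k ∈ J, ∑ m ∈ S.filter (P k), 1 / (m : ℝ) := by
        rw [Finset.sum_comm]
        simp only [Finset.sum_filter]
    _ ≤ ∑ _k ∈ J, B := Finset.sum_le_sum hone
    _ = J.card * B := by rw [Finset.sum_const, nsmul_eq_mul]
    _ ≤ 4 * (K + 1) * B := by gcongr
    _ = _ := by rw [hB, ht]; ring

/-! ### Orthogonality of characters -/

/-- By orthogonality, a mean square over all characters is at most the number of pairs of
indices giving the same reduced residue class. -/
lemma mean_square_le_card {ι : Type*} (q : ℕ) [NeZero q] (T : Finset ι) (β : ι → ℂ)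
    (x : ι → ZMod q) (hβ : ∀ t ∈ T, ‖β t‖ ≤ 1) :
    (1 / (Nat.totient q : ℝ)) * ∑ χ : DirichletCharacter ℂ q,
        ‖∑ t ∈ T, β t * (starRingEnd ℂ) (χ (x t))‖ ^ 2 ≤
      ∑ t ∈ T.filter (fun t => IsUnit (x t)), ((T.filter (fun s => x s = x t)).card : ℝ) := by
  have hφ : (0 : ℝ) < Nat.totient q := by
    exact_mod_cast Nat.totient_pos.2 (NeZero.pos q)
  have hin : ∀ a b : ZMod q, ∑ χ : DirichletCharacter ℂ q, (starRingEnd ℂ) (χ a) * χ b =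
      if IsUnit a ∧ b = a then (Nat.totient q : ℂ) else 0 := by
    intro a b
    by_cases ha : IsUnit a
    · have h := DirichletCharacter.sum_char_inv_mul_char_eq ℂ ha b
      have e : ∀ χ : DirichletCharacter ℂ q, (starRingEnd ℂ) (χ a) = χ a⁻¹ := by
        intro χ
        have h1 : χ a⁻¹ * χ a = 1 := by
          rw [← map_mul, ZMod.inv_mul_of_unit a ha, map_one]
        have h2 : (starRingEnd ℂ) (χ a) * χ a = 1 := by
          obtain ⟨u, rfl⟩ := ha
          rw [mul_comm, Complex.mul_conj, Complex.normSq_eq_norm_sq,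
            DirichletCharacter.unit_norm_eq_one χ u]
          norm_num
        have h3 : χ a ≠ 0 := right_ne_zero_of_mul_eq_one h2
        exact mul_right_cancel₀ h3 (h2.trans h1.symm)
      simp only [e, ha, true_and]
      rw [h]
      simp [eq_comm]
    · rw [if_neg (fun h => ha h.1)]
      refine Finset.sum_eq_zero fun χ _ => ?_
      rw [χ.map_nonunit ha]; simp
  have hexp : ((∑ χ : DirichletCharacter ℂ q,
        ‖∑ t ∈ T, β t * (starRingEnd ℂ) (χ (x t))‖ ^ 2 : ℝ) : ℂ) =
      ∑ t ∈ T, ∑ s ∈ T, β t * (starRingEnd ℂ) (β s) *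
        (if IsUnit (x t) ∧ x s = x t then (Nat.totient q : ℂ) else 0) := by
    push_cast
    have e1 : ∀ χ : DirichletCharacter ℂ q,
        ((‖∑ t ∈ T, β t * (starRingEnd ℂ) (χ (x t))‖ : ℂ)) ^ 2 =
        ∑ t ∈ T, ∑ s ∈ T, β t * (starRingEnd ℂ) (β s) *
          ((starRingEnd ℂ) (χ (x t)) * χ (x s)) := by
      intro χ
      rw [← Complex.mul_conj', map_sum, Finset.sum_mul_sum]
      refine Finset.sum_congr rfl fun t _ => Finset.sum_congr rfl fun s _ => ?_
      rw [map_mul, Complex.conj_conj]; ring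
    rw [Finset.sum_congr rfl fun χ _ => e1 χ, Finset.sum_comm]
    refine Finset.sum_congr rfl fun t _ => ?_
    rw [Finset.sum_comm]
    refine Finset.sum_congr rfl fun s _ => ?_
    rw [← Finset.mul_sum, hin]
  have hbound : ∑ χ : DirichletCharacter ℂ q,
        ‖∑ t ∈ T, β t * (starRingEnd ℂ) (χ (x t))‖ ^ 2 ≤
      ∑ t ∈ T, ∑ s ∈ T, if IsUnit (x t) ∧ x s = x t then (Nat.totient q : ℝ) else 0 := by
    have h0 : (0 : ℝ) ≤ ∑ χ : DirichletCharacter ℂ q,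
        ‖∑ t ∈ T, β t * (starRingEnd ℂ) (χ (x t))‖ ^ 2 :=
      Finset.sum_nonneg fun _ _ => by positivity
    rw [← Complex.norm_of_nonneg h0, hexp]
    refine (norm_sum_le _ _).trans (Finset.sum_le_sum fun t ht => ?_)
    refine (norm_sum_le _ _).trans (Finset.sum_le_sum fun s hs => ?_)
    rw [norm_mul, norm_mul, RCLike.norm_conj]
    have h1 : ‖β t‖ * ‖β s‖ ≤ 1 := mul_le_one₀ (hβ t ht) (norm_nonneg _) (hβ s hs)
    split_ifs
    · rw [Complex.norm_natCast]
      nlinarith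
    · simp
  calc _ ≤ (1 / (Nat.totient q : ℝ)) *
        ∑ t ∈ T, ∑ s ∈ T, if IsUnit (x t) ∧ x s = x t then (Nat.totient q : ℝ) else 0 := by
        gcongr
    _ = _ := by
        rw [Finset.mul_sum, Finset.sum_filter]
        refine Finset.sum_congr rfl fun t _ => ?_
        by_cases h : IsUnit (x t)
        · simp only [h, true_and, if_true]
          rw [← Finset.sum_filter, Finset.sum_const, nsmul_eq_mul]
          field_simp
        · simp [h]

/-! ### Counting pairs `(l, m)` -/

/-- A number `n` has boundedly many `R`-rough divisors when `n` is at most a power of `R`: they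
correspond to sub-multisets of the prime factors of `n` exceeding `R`. -/
lemma card_rough_divisors_le {R n : ℕ} (hn : 0 < n) (D : Finset ℕ)
    (hD : ∀ l ∈ D, l ∣ n ∧ IsRough R l) :
    ∃ j : ℕ, D.card ≤ 2 ^ j ∧ R ^ j ≤ n := by
  set Q := n.primeFactorsList.filter (fun p => decide (R < p)) with hQ
  refine ⟨Q.length, ?_, ?_⟩
  · rw [← List.length_sublists]
    refine le_trans ?_ (List.toFinset_card_le _)
    refine Finset.card_le_card_of_injOn Nat.primeFactorsList ?_ ?_
    · intro l hl
      obtain ⟨h1, h2⟩ := hD l hl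
      simp only [Finset.mem_coe, List.mem_toFinset, List.mem_sublists]
      have h3 : l.primeFactorsList.filter (fun p => decide (R < p)) = l.primeFactorsList := by
        rw [List.filter_eq_self]
        intro p hp
        have hp1 := Nat.prime_of_mem_primeFactorsList hp
        have hp2 := Nat.dvd_of_mem_primeFactorsList hp
        simp only [decide_eq_true_eq]
        by_contra hc
        exact h2 p hp1 (not_lt.1 hc) hp2
      rw [← h3]
      exact (Nat.primeFactorsList_sublist_of_dvd h1 hn.ne').filter _
    · intro a ha b hb hab
      have ha0 := Nat.pos_of_dvd_of_pos (hD a ha).1 hn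
      have hb0 := Nat.pos_of_dvd_of_pos (hD b hb).1 hn
      rw [← Nat.prod_primeFactorsList ha0.ne', ← Nat.prod_primeFactorsList hb0.ne', hab]
  · have h1 : R ^ Q.length ≤ Q.prod := by
      refine List.pow_card_le_prod _ _ fun p hp => ?_
      have := (List.mem_filter.1 hp).2
      simp only [decide_eq_true_eq] at this
      exact this.le
    refine h1.trans (Nat.le_of_dvd hn ?_)
    conv_rhs => rw [← Nat.prod_primeFactorsList hn.ne']
    exact List.Sublist.prod_dvd_prod List.filter_sublist

/-- Pairs `(l, m)` with `l` rough and `l * m` in a fixed residue class, when the range of `l` is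
long enough for the sieve for every occurring `m`. -/
lemma card_pairs_modEq_le {k R : ℕ} (hk : 0 < k) (hR : 2 ≤ R) {N : ℝ} (U : Finset (ℕ × ℕ))
    (hU : ∀ t ∈ U, 1 ≤ t.1 ∧ 1 ≤ t.2 ∧ ((t.1 * t.2 : ℕ) : ℝ) ≤ N ∧ IsRough R t.1 ∧
      Nat.Coprime t.2 k ∧ (k : ℝ) * (R : ℝ) ^ 8 * t.2 ≤ N)
    (hmod : ∀ s ∈ U, ∀ t ∈ U, s.1 * s.2 ≡ t.1 * t.2 [MOD k]) :
    (U.card : ℝ) ≤ 3 * N / (Nat.totient k * Real.log R) *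
      ∑ m ∈ U.image Prod.snd, 1 / (m : ℝ) := by
  rw [Finset.card_eq_sum_card_image Prod.snd U, Finset.mul_sum]
  push_cast
  refine Finset.sum_le_sum fun m hm => ?_
  obtain ⟨⟨l₀, m'⟩, ht₀, rfl⟩ := Finset.mem_image.1 hm
  dsimp only
  obtain ⟨-, hm1, -, -, hcop, hbig⟩ := hU _ ht₀
  dsimp only at hm1 hcop hbig
  have hm0 : (0 : ℝ) < m' := by exact_mod_cast hm1
  have h1 := card_rough_modEq_le hk hR l₀ (X := N / m') (by rwa [le_div_iff₀ hm0])
  have h2 : (U.filter (fun t => t.2 = m')).card ≤ ((Finset.Ioc 0 ⌊N / (m' : ℝ)⌋₊).filter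
      (fun l => l ≡ l₀ [MOD k] ∧ IsRough R l)).card := by
    refine Finset.card_le_card_of_injOn Prod.fst ?_ ?_
    · rintro ⟨l, m⟩ ht
      simp only [Finset.coe_filter, Set.mem_ofPred_eq] at ht
      obtain ⟨htU, rfl⟩ := ht
      obtain ⟨hl1, -, hlm, hrough, -, -⟩ := hU _ htU
      dsimp only at hl1 hlm hrough
      simp only [Finset.coe_filter, Set.mem_ofPred_eq, Finset.mem_Ioc]
      refine ⟨⟨hl1, ?_⟩, ?_, hrough⟩
      · refine Nat.le_floor ?_
        rw [le_div_iff₀ hm0]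
        exact_mod_cast hlm
      · exact Nat.ModEq.cancel_right_of_coprime hcop.symm (hmod _ htU _ ht₀)
    · rintro ⟨l, m⟩ ht ⟨l', m''⟩ ht' h
      simp only [Finset.coe_filter, Set.mem_ofPred_eq] at ht ht' h
      rw [h, ht.2, ht'.2]
  calc _ ≤ _ := (Nat.cast_le (α := ℝ)).2 h2
    _ ≤ _ := h1
    _ = _ := by
      rw [div_mul_div_comm, mul_one, mul_div_assoc', div_div, mul_comm (m' : ℝ)]

/-- Pairs `(l, m)` with `l` rough and `l * m ≤ N` in a fixed residue class modulo `q`, when `N`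
is at most a bounded power of `q`. -/
lemma card_pairs_le_of_small {q R : ℕ} (hq : 0 < q) (hR : 2 ≤ R) {N κ : ℝ} (hN : 1 ≤ N)
    (hNq : Real.log N ≤ 4 * Real.log q) (hκ : Real.log q ≤ κ * Real.log R)
    (U : Finset (ℕ × ℕ))
    (hU : ∀ t ∈ U, 1 ≤ t.1 ∧ 1 ≤ t.2 ∧ ((t.1 * t.2 : ℕ) : ℝ) ≤ N ∧ IsRough R t.1)
    (a : ℕ) (hmod : ∀ s ∈ U, s.1 * s.2 ≡ a [MOD q]) :
    (U.card : ℝ) ≤ (2 : ℝ) ^ (4 * κ) * (N / q + 1) := by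
  have hR' : (2 : ℝ) ≤ R := by exact_mod_cast hR
  have hlogR : 0 < Real.log R := Real.log_pos (by linarith)
  rw [Finset.card_eq_sum_card_image (fun t : ℕ × ℕ => t.1 * t.2) U]
  push_cast
  have hfib : ∀ n ∈ U.image (fun t : ℕ × ℕ => t.1 * t.2),
      ((U.filter (fun t : ℕ × ℕ => t.1 * t.2 = n)).card : ℝ) ≤ (2 : ℝ) ^ (4 * κ) := by
    intro n hn
    obtain ⟨t₀, ht₀, rfl⟩ := Finset.mem_image.1 hn
    obtain ⟨hl0, hm0, hlm, -⟩ := hU _ ht₀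
    have hn0 : 0 < t₀.1 * t₀.2 := Nat.mul_pos hl0 hm0
    obtain ⟨j, hj1, hj2⟩ := card_rough_divisors_le (R := R) hn0
      ((U.filter (fun t : ℕ × ℕ => t.1 * t.2 = t₀.1 * t₀.2)).image Prod.fst) (by
        intro l hl
        obtain ⟨t, ht, rfl⟩ := Finset.mem_image.1 hl
        obtain ⟨ht1, ht2⟩ := Finset.mem_filter.1 ht
        exact ⟨Dvd.intro _ ht2, (hU t ht1).2.2.2⟩)
    rw [Finset.card_image_of_injOn] at hj1
    · have h1 : (j : ℝ) * Real.log R ≤ 4 * κ * Real.log R := by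
        rw [← Real.log_pow]
        have h2 : Real.log ((R : ℝ) ^ j) ≤ Real.log N :=
          Real.log_le_log (by positivity) (le_trans (by exact_mod_cast hj2) hlm)
        linarith
      have h2 : (j : ℝ) ≤ 4 * κ := le_of_mul_le_mul_right h1 hlogR
      calc _ ≤ ((2 ^ j : ℕ) : ℝ) := by exact_mod_cast hj1
        _ = (2 : ℝ) ^ (j : ℝ) := by push_cast; rw [Real.rpow_natCast]
        _ ≤ _ := Real.rpow_le_rpow_of_exponent_le (by norm_num) h2
    · rintro ⟨l, m⟩ ht ⟨l', m'⟩ ht' h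
      simp only [Finset.coe_filter, Set.mem_ofPred_eq] at ht ht' h
      subst h
      have hl := (hU _ ht.1).1
      have : m = m' := Nat.eq_of_mul_eq_mul_left hl (ht.2.trans ht'.2.symm)
      rw [this]
  have hcard : ((U.image (fun t : ℕ × ℕ => t.1 * t.2)).card : ℝ) ≤ N / q + 1 := by
    have h1 : U.image (fun t : ℕ × ℕ => t.1 * t.2) ⊆
        (Finset.Ioc 0 ⌊N⌋₊).filter (fun n => n ≡ a [MOD q]) := by
      intro n hn
      obtain ⟨t, ht, rfl⟩ := Finset.mem_image.1 hn
      obtain ⟨hl0, hm0, hlm, -⟩ := hU _ ht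
      exact Finset.mem_filter.2 ⟨Finset.mem_Ioc.2 ⟨Nat.mul_pos hl0 hm0, Nat.le_floor hlm⟩,
        hmod t ht⟩
    have h2 := (abs_le.1 (abs_card_modEq_sub_le hq ⌊N⌋₊ a)).2
    have h3 := (Nat.cast_le (α := ℝ)).2 (Finset.card_le_card h1)
    have h4 : (⌊N⌋₊ : ℝ) / q ≤ N / q := by
      gcongr
      exact Nat.floor_le (by linarith)
    linarith
  calc _ ≤ ∑ _n ∈ U.image (fun t : ℕ × ℕ => t.1 * t.2), (2 : ℝ) ^ (4 * κ) :=
        Finset.sum_le_sum hfib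
    _ = ((U.image (fun t : ℕ × ℕ => t.1 * t.2)).card : ℝ) * (2 : ℝ) ^ (4 * κ) := by
        rw [Finset.sum_const, nsmul_eq_mul]
    _ ≤ (N / q + 1) * (2 : ℝ) ^ (4 * κ) := by gcongr
    _ = _ := mul_comm _ _

lemma isRough_of_gcd_primorialLT {z : ℝ} {R l : ℕ} (hRz : (R : ℝ) < z)
    (hl : Nat.gcd l (primorialLT z) = 1) : IsRough R l := by
  intro p hp hpR hpl
  have h1 : p ∣ primorialLT z := by
    refine Finset.dvd_prod_of_mem (fun p => p) (Finset.mem_filter.2 ⟨?_, hp⟩)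
    rw [Finset.mem_range, Nat.lt_ceil]
    exact lt_of_le_of_lt (by exact_mod_cast hpR) hRz
  exact hp.one_lt.ne' (Nat.eq_one_of_dvd_coprimes hl hpl h1)

/-- The sifting level is `R = ⌊q ^ (ε / 32)⌋`, where `L = log q`. It lies below `q ^ ε`, and `R ^ 8`
is small enough for the error term of the sieve to be negligible. -/
lemma exists_level {ε L : ℝ} (hεL : 200 ≤ ε * L) :
    ∃ R : ℕ, 2 ≤ R ∧ (R : ℝ) < Real.exp (ε * L) ∧ (R : ℝ) ^ 8 ≤ Real.exp (ε * L / 4) ∧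
      ε * L / 64 ≤ Real.log R := by
  have hE := Real.add_one_le_exp (ε * L / 64)
  have hE2 : Real.exp (ε * L / 32) = Real.exp (ε * L / 64) * Real.exp (ε * L / 64) := by
    rw [← Real.exp_add]; ring_nf
  have h1 : Real.exp (ε * L / 64) ≤ (⌊Real.exp (ε * L / 32)⌋₊ : ℝ) := by
    have := Nat.lt_floor_add_one (Real.exp (ε * L / 32))
    nlinarith
  have h2 : (⌊Real.exp (ε * L / 32)⌋₊ : ℝ) ≤ Real.exp (ε * L / 32) :=
    Nat.floor_le (Real.exp_pos _).le
  refine ⟨⌊Real.exp (ε * L / 32)⌋₊, ?_, ?_, ?_, ?_⟩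
  · have : (2 : ℝ) ≤ (⌊Real.exp (ε * L / 32)⌋₊ : ℝ) := by linarith
    exact_mod_cast this
  · exact h2.trans_lt (Real.exp_lt_exp.2 (by linarith))
  · calc _ ≤ (Real.exp (ε * L / 32)) ^ 8 := by gcongr
      _ = _ := by rw [← Real.exp_nat_mul]; congr 1; push_cast; ring
  · rw [← Real.log_exp (ε * L / 64)]
    exact Real.log_le_log (Real.exp_pos _) h1


/-! ### The mean square -/

/-- **A mean value estimate for character sums with one variable in short intervals.** -/
theorem mean_square_short_intervals :
    ∃ ε₀ : ℝ, 0 < ε₀ ∧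
      ∀ ε : ℝ, 0 < ε → ε < ε₀ →
        ∃ C : ℝ, 0 < C ∧
          ∃ q₀ : ℕ,
            ∀ (q : ℕ) [NeZero q], q₀ ≤ q →
              ∀ K : ℕ, (K : ℝ) ≤ Real.log q →
                ∀ H M N : ℝ, 1 ≤ H → 1 ≤ M → 1 ≤ N →
                  (K : ℝ) ≤ (1 / 4) * Real.log M →
                  M ^ (4 : ℕ) ≤ N → (q : ℝ) ^ ε ≤ M ^ (4 : ℕ) → H ≤ (q : ℝ) ^ (ε / 20) →
                  ∀ α : ℕ → ℕ → ℂ, (∀ l m : ℕ, ‖α l m‖ ≤ 1) →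
                    (1 / (Nat.totient q : ℝ)) *
                        ∑ χ : DirichletCharacter ℂ q,
                          ‖∑ t ∈ ((Finset.range (⌊N⌋₊ + 1)) ×ˢ (Finset.range (⌊N⌋₊ + 1))).filter
                              (fun t : ℕ × ℕ => 1 ≤ t.1 ∧ ((t.1 * t.2 : ℕ) : ℝ) ≤ N ∧
                                inShortUnion M H K t.2 ∧
                                Nat.gcd t.1 (primorialLT ((q : ℝ) ^ ε)) = 1),
                            α t.1 t.2 * (starRingEnd ℂ) (χ ((t.1 * t.2 : ℕ) : ZMod q))‖ ^ 2 ≤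
                      C * ((Nat.totient q : ℝ) / (q : ℝ)) * (N + N ^ 2 / (q : ℝ)) * (1 / H) := by
  refine ⟨1, one_pos, fun ε hε hε1 => ?_⟩
  set D₁ : ℝ := 384 * (36 * Real.exp (160 / ε)) / ε with hD₁
  have hD₁0 : 0 < D₁ := by positivity
  set D₂ : ℝ := D₁ + (2 : ℝ) ^ (4 * (64 / ε)) with hD₂
  have hD₂0 : 0 < D₂ := by positivity
  refine ⟨D₁ * D₂, by positivity, ⌈Real.exp (200 / ε)⌉₊, ?_⟩
  intro q _ hq₀ K hKL H M N hH hM hN hKM hMN hqM hHq α hα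
  have hq : 0 < q := NeZero.pos q
  have hq' : (0 : ℝ) < q := by exact_mod_cast hq
  set L := Real.log q with hL
  have hLε : 200 / ε ≤ L := by
    rw [hL, Real.le_log_iff_exp_le hq']
    exact (Nat.le_ceil _).trans (by exact_mod_cast hq₀)
  have hεL : 200 ≤ ε * L := by rw [div_le_iff₀ hε] at hLε; linarith
  have hL0 : 200 ≤ L := by nlinarith
  have hM0 : 0 < M := by linarith
  have hN0 : 0 < N := by linarith
  have hH0 : 0 < H := by linarith
  have hlogM : ε * L ≤ 4 * Real.log M := by
    have := Real.log_le_log (by positivity) hqM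
    rw [Real.log_rpow hq', Real.log_pow] at this
    exact_mod_cast this
  have hlogN : 4 * Real.log M ≤ Real.log N := by
    have := Real.log_le_log (by positivity) hMN
    rw [Real.log_pow] at this
    exact_mod_cast this
  obtain ⟨R, hR2, hRz, hR8, hlogR⟩ := exists_level hεL
  have hRq : (R : ℝ) < (q : ℝ) ^ ε := by
    rwa [Real.rpow_def_of_pos hq', mul_comm]
  have hlogR0 : 0 < Real.log R := by nlinarith
  have hmpos : ∀ m : ℕ, inShortUnion M H K m → 1 ≤ m := by
    rintro m ⟨k, -, hk, -⟩
    have : (0 : ℝ) < m := lt_trans (by positivity) hk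
    exact_mod_cast this
  have hmle : ∀ m : ℕ, inShortUnion M H K m → (m : ℝ) ≤ Real.exp (3 / 2 * Real.log M + 1) := by
    rintro m ⟨k, hk1, -, hk2⟩
    refine hk2.trans ?_
    have hk3 : (k : ℝ) ≤ 2 * K + 1 := by exact_mod_cast (abs_le.1 hk1).2
    calc M * Real.exp k = Real.exp (Real.log M + k) := by rw [Real.exp_add, Real.exp_log hM0]
      _ ≤ _ := Real.exp_le_exp.2 (by linarith)
  -- The range of `l` is long enough for the sieve, without a congruence condition and, for
  -- large `N`, also modulo `q`.
  have hlong₁ : ∀ m : ℕ, inShortUnion M H K m → ((1 : ℕ) : ℝ) * (R : ℝ) ^ 8 * m ≤ N := by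
    intro m hm
    calc _ ≤ 1 * Real.exp (ε * L / 4) * Real.exp (3 / 2 * Real.log M + 1) := by
          rw [Nat.cast_one]
          gcongr
          exact hmle m hm
      _ = Real.exp (ε * L / 4 + (3 / 2 * Real.log M + 1)) := by
          rw [one_mul, ← Real.exp_add]
      _ ≤ Real.exp (Real.log N) := Real.exp_le_exp.2 (by linarith)
      _ = N := Real.exp_log hN0
  have hlong₂ : 4 * L ≤ Real.log N → ∀ m : ℕ, inShortUnion M H K m →
      (q : ℝ) * (R : ℝ) ^ 8 * m ≤ N := by
    intro hbig m hm
    calc _ ≤ Real.exp L * Real.exp (ε * L / 4) * Real.exp (3 / 2 * Real.log M + 1) := by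
          rw [hL, Real.exp_log hq', ← hL]
          gcongr
          exact hmle m hm
      _ = Real.exp (L + ε * L / 4 + (3 / 2 * Real.log M + 1)) := by
          rw [← Real.exp_add, ← Real.exp_add]
      _ ≤ Real.exp (Real.log N) := Real.exp_le_exp.2 (by nlinarith)
      _ = N := Real.exp_log hN0
  -- The factor `(K + 1) / log R` is bounded.
  have hsum : ∀ S : Finset ℕ, (∀ m ∈ S, inShortUnion M H K m ∧ Nat.Coprime m q) →
      3 * N / Real.log R * ∑ m ∈ S, 1 / (m : ℝ) ≤
        D₁ * (N * ((Nat.totient q : ℝ) / q) * (1 / H)) := by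
    intro S hS
    have h1 := sum_inv_shortUnion_le hε hq
      (le_trans (by gcongr; norm_num) hLε) hH hM hKM hqM hHq S hS
    have h2 : 3 * N / Real.log R ≤ 3 * N / (ε * L / 64) := by gcongr
    have h3 : (K + 1 : ℝ) ≤ 2 * L := by linarith
    calc _ ≤ 3 * N / (ε * L / 64) *
          (36 * Real.exp (160 / ε) * ((Nat.totient q : ℝ) / q) * ((K + 1) / H)) := by gcongr
      _ ≤ 3 * N / (ε * L / 64) *
          (36 * Real.exp (160 / ε) * ((Nat.totient q : ℝ) / q) * (2 * L / H)) := by gcongr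
      _ = _ := by
          have : L ≠ 0 := by linarith
          rw [hD₁]
          field_simp
          ring
  set T := ((Finset.range (⌊N⌋₊ + 1)) ×ˢ (Finset.range (⌊N⌋₊ + 1))).filter
    (fun t : ℕ × ℕ => 1 ≤ t.1 ∧ ((t.1 * t.2 : ℕ) : ℝ) ≤ N ∧ inShortUnion M H K t.2 ∧
      Nat.gcd t.1 (primorialLT ((q : ℝ) ^ ε)) = 1) with hT
  have hTmem : ∀ t ∈ T, 1 ≤ t.1 ∧ ((t.1 * t.2 : ℕ) : ℝ) ≤ N ∧ inShortUnion M H K t.2 ∧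
      IsRough R t.1 := by
    intro t ht
    obtain ⟨-, h1, h2, h3, h4⟩ := Finset.mem_filter.1 ht
    exact ⟨h1, h2, h3, isRough_of_gcd_primorialLT hRq h4⟩
  set x : ℕ × ℕ → ZMod q := fun t => ((t.1 * t.2 : ℕ) : ZMod q) with hx
  have hcop : ∀ t : ℕ × ℕ, IsUnit (x t) → Nat.Coprime t.2 q := by
    intro t ht
    rw [hx] at ht
    exact ((ZMod.isUnit_iff_coprime _ _).1 ht).coprime_mul_left
  have hfirst : ((T.filter (fun t => IsUnit (x t))).card : ℝ) ≤
      D₁ * (N * ((Nat.totient q : ℝ) / q) * (1 / H)) := by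
    have h1 := card_pairs_modEq_le (k := 1) one_pos hR2 (N := N)
      (T.filter (fun t => IsUnit (x t))) (by
        intro t ht
        obtain ⟨ht1, ht2⟩ := Finset.mem_filter.1 ht
        obtain ⟨a1, a2, a3, a4⟩ := hTmem t ht1
        exact ⟨a1, hmpos _ a3, a2, a4, Nat.coprime_one_right _, hlong₁ _ a3⟩)
      (fun _ _ _ _ => Nat.modEq_one)
    rw [Nat.totient_one, Nat.cast_one, one_mul] at h1
    refine h1.trans (hsum _ ?_)
    intro m hm
    obtain ⟨t, ht, rfl⟩ := Finset.mem_image.1 hm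
    obtain ⟨ht1, ht2⟩ := Finset.mem_filter.1 ht
    exact ⟨(hTmem t ht1).2.2.1, hcop t ht2⟩
  have hsecond : ∀ t ∈ T.filter (fun t => IsUnit (x t)),
      ((T.filter (fun s => x s = x t)).card : ℝ) ≤ D₂ * (N / q + 1) := by
    intro t ht
    have htu := (Finset.mem_filter.1 ht).2
    have hmod : ∀ s ∈ T.filter (fun s => x s = x t), s.1 * s.2 ≡ t.1 * t.2 [MOD q] :=
      fun s hs => (ZMod.natCast_eq_natCast_iff _ _ _).1 (Finset.mem_filter.1 hs).2
    have hpow : (0 : ℝ) < (2 : ℝ) ^ (4 * (64 / ε)) := by positivity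
    have hNq : 0 < N / q := by positivity
    rcases le_total (4 * L) (Real.log N) with hbig | hsmall
    · have hcop' : ∀ s ∈ T.filter (fun s => x s = x t), Nat.Coprime s.2 q :=
        fun s hs => hcop s (by rw [(Finset.mem_filter.1 hs).2]; exact htu)
      have h1 := card_pairs_modEq_le hq hR2 (N := N) (T.filter (fun s => x s = x t)) (by
        intro s hs
        obtain ⟨a1, a2, a3, a4⟩ := hTmem s (Finset.mem_filter.1 hs).1
        exact ⟨a1, hmpos _ a3, a2, a4, hcop' s hs, hlong₂ hbig _ a3⟩)
        (fun s hs s' hs' => (hmod s hs).trans (hmod s' hs').symm)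
      have h2 := hsum ((T.filter (fun s => x s = x t)).image Prod.snd) (by
        intro m hm
        obtain ⟨s, hs, rfl⟩ := Finset.mem_image.1 hm
        exact ⟨(hTmem s (Finset.mem_filter.1 hs).1).2.2.1, hcop' s hs⟩)
      have hφ : (0 : ℝ) < Nat.totient q := by exact_mod_cast Nat.totient_pos.2 hq
      have hH1 : 1 / H ≤ 1 := by rw [div_le_one hH0]; exact hH
      calc _ ≤ _ := h1
        _ = (3 * N / Real.log R * ∑ m ∈ (T.filter (fun s => x s = x t)).image Prod.snd,
              1 / (m : ℝ)) / Nat.totient q := by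
            field_simp
        _ ≤ (D₁ * (N * ((Nat.totient q : ℝ) / q) * (1 / H))) / Nat.totient q := by gcongr
        _ = D₁ * (N / q) * (1 / H) := by field_simp
        _ ≤ D₁ * (N / q) * 1 := by gcongr
        _ ≤ D₂ * (N / q + 1) := by
            rw [hD₂, mul_one]
            nlinarith [mul_pos hpow hNq]
    · have h1 := card_pairs_le_of_small hq hR2 hN hsmall (κ := 64 / ε)
        (by
          have : 64 / ε * (ε * L / 64) ≤ 64 / ε * Real.log R := by gcongr
          have e : 64 / ε * (ε * L / 64) = L := by field_simp
          linarith)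
        (T.filter (fun s => x s = x t)) (by
          intro s hs
          obtain ⟨a1, a2, a3, a4⟩ := hTmem s (Finset.mem_filter.1 hs).1
          exact ⟨a1, hmpos _ a3, a2, a4⟩) (t.1 * t.2) hmod
      refine h1.trans ?_
      gcongr
      rw [hD₂]; linarith
  calc _ ≤ _ := mean_square_le_card q T (fun t => α t.1 t.2) x (fun t _ => hα _ _)
    _ ≤ ∑ _t ∈ T.filter (fun t => IsUnit (x t)), D₂ * (N / q + 1) := Finset.sum_le_sum hsecond
    _ = ((T.filter (fun t => IsUnit (x t))).card : ℝ) * (D₂ * (N / q + 1)) := by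
        rw [Finset.sum_const, nsmul_eq_mul]
    _ ≤ D₁ * (N * ((Nat.totient q : ℝ) / q) * (1 / H)) * (D₂ * (N / q + 1)) := by gcongr
    _ = _ := by field_simp; ring
end
end

section
/- There exists ε₀ > 0 such that for every ε ∈ (0, ε₀) and every c > 0 there is q₀(ε, c) with the following property. Let q ≥ q₀ be a natural number, let h : ℕ → ℝ∖{0} be a multiplicative function, adopt the Easy set-up, and let Δ ∈ {+,−} and a ∈ (ℤ/qℤ)^×. If there exist B₂, B₃ ⊆ (ℤ/qℤ)^× and Δ̄ = (Δ₁, Δ₂, Δ₃) ∈ {+,−}³ with Δ₁Δ₂Δ₃ = Δ (product of signs in {±1}) such that S^{Δ̄}_{B₂,B₃}(a) ≥ c/(q^{1+ε/100} · log q), then a ∈ E_h^{Δ}(q^{2+ε}). -/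
/-!
Suppose `a` is not represented. If a tuple `(n₁, n₂, n₃, p, u)` contributes to the convolution sum,
its product is congruent to `a`, is at most `q ^ (2 + ε)`, and would have sign `Δ` if it were
squarefree, since the five factors would then be pairwise coprime and `Δ₁ ^ 3 Δ₂ Δ₃ = Δ`
(`sign_of_squarefree`). Hence every contributing product is divisible by the square of a prime `r`.
As the `nᵢ` are `q ^ √ε`-rough, `p` is a prime above `q ^ ε / e` and `u` is squarefree, such an `r`
lies in `(q ^ ε / e, q ^ (1/2)]` (`exists_large_sq_dvd`).

The integers `m ≤ q ^ (2 + ε)` with `m ≡ a (mod q)` divisible by such a square number at most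
`8 q` (`card_badSet_le`), a saving of about `q ^ ε` over the `q ^ (1 + ε)` integers in the
residue class. Every other factor in `S` costs an arbitrarily small power of `q`: the number of
factorizations of `m` by the divisor bound (`divisor_bound`), the Mertens factor by Chebyshev's
estimate for `∑ log p / p` (`sum_log_div_le`, `euler_product_bound`), and the lower bound
`|[I]_q| ≥ q ^ (1/2 - δ)` by a Möbius sieve (`card_coprime_Ioc_ge`). With `δ = ε / 100` this gives
`S ≤ 8 q ^ (-1 - 89 ε / 100)`, contradicting the assumed lower bound once `q` is large.
-/

open scoped BigOperators Classical

noncomputable section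

/-- `h` is a multiplicative arithmetic function. -/
def IsMultFn (h : ℕ → ℝ) : Prop :=
  h 1 = 1 ∧ ∀ m n : ℕ, Nat.Coprime m n → h (m * n) = h m * h n

/-- The Mertens-type factor `∏_{p < z, p ∤ q} (1 - 1/p)⁻¹`. -/
def mertensFactor (q : ℕ) (z : ℝ) : ℝ :=
  ∏ p ∈ (Finset.range ⌈z⌉₊).filter (fun p : ℕ => p.Prime ∧ ¬ p ∣ q), (1 - 1 / (p : ℝ))⁻¹

/-- The residue of `n` modulo `q` lies (as a unit) in `B ⊆ (ℤ/qℤ)ˣ`. -/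
def memUnit (q : ℕ) (B : Set ((ZMod q)ˣ)) (n : ℕ) : Prop :=
  ∃ u : (ZMod q)ˣ, ((u : ZMod q) = (n : ZMod q)) ∧ u ∈ B

/-- `[I]_q` for `I = (R/e, R]` with `R = q^(1/2)` (Easy set-up). -/
def IqE (q : ℕ) : Finset ℕ :=
  (Finset.range (⌊(q : ℝ) ^ ((1 : ℝ) / 2)⌋₊ + 1)).filter fun n : ℕ =>
    (q : ℝ) ^ ((1 : ℝ) / 2) / Real.exp 1 < (n : ℝ) ∧ Nat.Coprime n q

/-- `f^Δ` from the Easy set-up; the sign `Δ` is encoded as `±1 : ℝ`, and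
`sgn(h(n)) = Δ` is expressed as `0 < Δ · h n`. -/
def fE (q : ℕ) (ε : ℝ) (h : ℕ → ℝ) (Δ : ℝ) (n : ℕ) : ℝ :=
  mertensFactor q ((q : ℝ) ^ Real.sqrt ε) *
    (if 0 < Δ * h n ∧ Nat.gcd n (primorialLT ((q : ℝ) ^ Real.sqrt ε)) = 1 ∧ n ∈ IqE q
      then 1 else 0)

/-- `𝒬_B^Δ` (Easy set-up): primes in `(q^ε/e, q^ε]` landing in `B` with sign `Δ`. -/
def QE (q : ℕ) (ε : ℝ) (h : ℕ → ℝ) (B : Set ((ZMod q)ˣ)) (Δ : ℝ) : Set ℕ :=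
  {p : ℕ | p.Prime ∧ (q : ℝ) ^ ε / Real.exp 1 < (p : ℝ) ∧ (p : ℝ) ≤ (q : ℝ) ^ ε ∧
    memUnit q B p ∧ 0 < Δ * h p}

/-- `𝒰_B^Δ` (Easy set-up): squarefree `u ≤ q^(1/2)` landing in `B` with sign `Δ`. -/
def UE (q : ℕ) (h : ℕ → ℝ) (B : Set ((ZMod q)ˣ)) (Δ : ℝ) : Set ℕ :=
  {u : ℕ | (u : ℝ) ≤ (q : ℝ) ^ ((1 : ℝ) / 2) ∧ Squarefree u ∧ memUnit q B u ∧ 0 < Δ * h u}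

/-- Indicator function of a set of naturals. -/
def ind (S : Set ℕ) (n : ℕ) : ℝ := if n ∈ S then 1 else 0

/-- `∑_{n ≡ a (mod q)} (g₁ ∗ g₂ ∗ g₃ ∗ g₄ ∗ g₅)(n)` for the Dirichlet convolution `∗` on `ℕ`. -/
def conv5Sum (q : ℕ) (g₁ g₂ g₃ g₄ g₅ : ℕ → ℝ) (a : ZMod q) : ℝ :=
  ∑ᶠ t : ℕ × ℕ × ℕ × ℕ × ℕ,
    if ((t.1 * t.2.1 * t.2.2.1 * t.2.2.2.1 * t.2.2.2.2 : ℕ) : ZMod q) = a then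
      g₁ t.1 * g₂ t.2.1 * g₃ t.2.2.1 * g₄ t.2.2.2.1 * g₅ t.2.2.2.2 else 0

/-- `S^{Δ̄}_{B₂,B₃}(a)` from the Easy set-up. -/
def SE (q : ℕ) (ε : ℝ) (h : ℕ → ℝ) (B₂ B₃ : Set ((ZMod q)ˣ)) (Δ₁ Δ₂ Δ₃ : ℝ)
    (a : (ZMod q)ˣ) : ℝ :=
  (1 / (((IqE q).card : ℝ) ^ 3 * (q : ℝ) ^ ε * (q : ℝ) ^ ((1 : ℝ) / 2))) *
    conv5Sum q (fE q ε h Δ₁) (fE q ε h Δ₁) (fE q ε h Δ₁)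
      (ind (QE q ε h B₂ Δ₂)) (ind (UE q h B₃ Δ₃)) ((a : (ZMod q)ˣ) : ZMod q)

/-- `E_h^Δ(x)`: residues represented by a squarefree `n ≤ x` with `sgn(h(n)) = Δ`. -/
def EhSet (q : ℕ) (h : ℕ → ℝ) (Δ x : ℝ) : Set ((ZMod q)ˣ) :=
  {a : (ZMod q)ˣ | ∃ n : ℕ, Squarefree n ∧ (n : ℝ) ≤ x ∧
    ((n : ZMod q) = (a : ZMod q)) ∧ 0 < Δ * h n}

/-! ### The divisor bound -/

/-- A prime power contributes at most `D (p ^ a) ^ δ`, and the constant `D` is needed only for the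
finitely many primes below `2 ^ (1 / δ)`. -/
lemma divisor_bound {δ : ℝ} (hδ : 0 < δ) :
    ∃ C : ℝ, 0 < C ∧ ∀ n : ℕ, n ≠ 0 → (n.divisors.card : ℝ) ≤ C * (n : ℝ) ^ δ := by
  obtain ⟨K, hK⟩ := exists_nat_ge ((2 : ℝ) ^ (1 / δ))
  have hl2 : 0 < Real.log 2 := Real.log_pos (by norm_num)
  set D : ℝ := max 1 (1 / (δ * Real.log 2)) with hD
  have hD1 : 1 ≤ D := le_max_left _ _
  have hD2 : 1 ≤ D * (δ * Real.log 2) := by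
    have : 1 / (δ * Real.log 2) ≤ D := le_max_right _ _
    rwa [div_le_iff₀ (by positivity)] at this
  have key : ∀ p a : ℕ, 2 ≤ p →
      ((a : ℝ) + 1) ≤ (if p < K then D else 1) * (((p ^ a : ℕ) : ℝ) ^ δ) := by
    intro p a hp
    have hp' : (2 : ℝ) ≤ p := by exact_mod_cast hp
    have e1 : (((p ^ a : ℕ) : ℝ) ^ δ) = ((p : ℝ) ^ δ) ^ a := by
      push_cast
      rw [← Real.rpow_natCast, ← Real.rpow_natCast, ← Real.rpow_mul (by positivity),
        ← Real.rpow_mul (by positivity), mul_comm]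
    split_ifs with h
    · have h2 : 1 + a * (δ * Real.log 2) ≤ ((p : ℝ) ^ δ) ^ a := by
        have h3 : (1 + δ * Real.log 2) ≤ (p : ℝ) ^ δ := by
          calc 1 + δ * Real.log 2 ≤ Real.exp (δ * Real.log 2) := by
                linarith [Real.add_one_le_exp (δ * Real.log 2)]
            _ = 2 ^ δ := by rw [Real.rpow_def_of_pos (by norm_num)]; ring_nf
            _ ≤ _ := by gcongr
        calc 1 + a * (δ * Real.log 2) ≤ (1 + δ * Real.log 2) ^ a :=
              one_add_mul_le_pow (by nlinarith [mul_pos hδ hl2]) a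
          _ ≤ _ := by gcongr
      rw [e1]
      have ha : (0 : ℝ) ≤ a := by positivity
      nlinarith
    · have h2 : 2 ≤ (p : ℝ) ^ δ := by
        have : ((2 : ℝ) ^ (1 / δ)) ^ δ = 2 := by
          rw [← Real.rpow_mul (by norm_num), one_div_mul_cancel hδ.ne', Real.rpow_one]
        rw [← this]
        have h4 : (K : ℝ) ≤ p := by exact_mod_cast not_lt.mp h
        gcongr
        linarith
      rw [e1, one_mul]
      calc (a : ℝ) + 1 ≤ 2 ^ a := by exact_mod_cast Nat.lt_two_pow_self
        _ ≤ _ := by gcongr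
  refine ⟨D ^ K, by positivity, fun n hn => ?_⟩
  rw [Nat.card_divisors hn]
  push_cast
  calc ∏ p ∈ n.primeFactors, ((n.factorization p : ℝ) + 1)
      ≤ ∏ p ∈ n.primeFactors,
        ((if p < K then D else 1) * (((p ^ n.factorization p : ℕ) : ℝ) ^ δ)) := by
        refine Finset.prod_le_prod (fun _ _ => by positivity) fun p hp => key p _ ?_
        exact (Nat.prime_of_mem_primeFactors hp).two_le
    _ = (∏ p ∈ n.primeFactors, (if p < K then D else 1)) * (n : ℝ) ^ δ := by
        rw [Finset.prod_mul_distrib, Real.finsetProd_rpow _ _ (fun _ _ => by positivity)]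
        congr 2
        conv_rhs => rw [← Nat.prod_factorization_pow_eq_self hn]
        rw [Finsupp.prod]
        push_cast
        rfl
    _ ≤ _ := by
        gcongr
        rw [Finset.prod_ite]
        simp only [Finset.prod_const, one_pow, mul_one]
        refine pow_le_pow_right₀ hD1 ?_
        calc _ ≤ (Finset.range K).card := Finset.card_le_card (by
              intro x hx; simp at hx ⊢; exact hx.2)
          _ = K := by simp

/-! ### Euler products -/

/-- Compares `∏ p ^ ⌊N / p⌋`, a divisor of `N !`, with `N ^ N`; rounding down costs
`θ(N) ≤ N log 4`. -/
lemma sum_log_div_le (N : ℕ) (hN : 1 ≤ N) :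
    ∑ p ∈ (Finset.range (N + 1)).filter Nat.Prime, Real.log p / p ≤
      Real.log N + Real.log 4 := by
  set P := (Finset.range (N + 1)).filter Nat.Prime with hP
  have hfac : ∑ p ∈ P, ((N / p : ℕ) : ℝ) * Real.log p ≤ Real.log (N.factorial) := by
    have hdvd : ∏ p ∈ P, p ^ (N / p) ∣ N.factorial := by
      refine Finset.prod_dvd_of_isRelPrime ?_ (fun p hp => ?_)
      rotate_left
      · have hp' : p.Prime := (Finset.mem_filter.mp hp).2
        have := (Nat.factorization_factorial_mul (n := N / p) hp')
        have h1 : p ^ (N / p) ∣ (p * (N / p)).factorial :=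
          (hp'.pow_dvd_iff_le_factorization (Nat.factorial_ne_zero _)).mpr (by omega)
        exact h1.trans (Nat.factorial_dvd_factorial (Nat.mul_div_le N p))
      · intro p hp r hr hne
        refine Nat.coprime_iff_isRelPrime.mp (Nat.Coprime.pow _ _ ?_)
        exact ((Nat.coprime_primes (Finset.mem_filter.mp hp).2 (Finset.mem_filter.mp hr).2).mpr hne)
    have hle := Nat.le_of_dvd (Nat.factorial_pos N) hdvd
    have h0 : ∀ p ∈ P, p ≠ 0 := fun p hp => (Finset.mem_filter.mp hp).2.ne_zero
    have : Real.log ((∏ p ∈ P, p ^ (N / p) : ℕ) : ℝ) = ∑ p ∈ P, ((N / p : ℕ) : ℝ) * Real.log p := by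
      push_cast
      rw [Real.log_prod (fun p hp => by have := h0 p hp; positivity)]
      exact Finset.sum_congr rfl fun p _ => by rw [Real.log_pow]
    rw [← this]
    refine Real.log_le_log ?_ (by exact_mod_cast hle)
    have : 0 < ∏ p ∈ P, p ^ (N / p) :=
      Finset.prod_pos fun p hp => pow_pos (Nat.pos_of_ne_zero (h0 p hp)) _
    exact_mod_cast this
  have hfac2 : Real.log (N.factorial) ≤ N * Real.log N := by
    rw [← Real.log_pow]
    refine Real.log_le_log (by positivity) ?_
    exact_mod_cast Nat.factorial_le_pow N
  have htheta : ∑ p ∈ P, Real.log p ≤ Real.log 4 * N := by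
    have h1 : ∑ p ∈ P, Real.log p = Real.log (primorial N) := by
      rw [primorial]
      push_cast
      rw [Real.log_prod (fun p hp => by have := (Finset.mem_filter.mp hp).2.ne_zero; positivity)]
    rw [h1, mul_comm, ← Real.log_pow]
    refine Real.log_le_log (by exact_mod_cast primorial_pos N) ?_
    exact_mod_cast primorial_le_four_pow N
  have hN' : (0 : ℝ) < N := by exact_mod_cast hN
  have hmain : (∑ p ∈ P, Real.log p / p) * N ≤
      ∑ p ∈ P, (((N / p : ℕ) : ℝ) * Real.log p + Real.log p) := by
    rw [Finset.sum_mul]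
    refine Finset.sum_le_sum fun p hp => ?_
    have hpp := (Finset.mem_filter.mp hp).2
    have hl : 0 ≤ Real.log p := Real.log_natCast_nonneg p
    have : (N : ℝ) / p ≤ (N / p : ℕ) + 1 := by
      rw [← Nat.floor_div_eq_div (K := ℝ)]
      exact (Nat.lt_floor_add_one _).le
    calc Real.log p / p * N = (N / p) * Real.log p := by ring
      _ ≤ ((N / p : ℕ) + 1) * Real.log p := by gcongr
      _ = _ := by ring
  rw [Finset.sum_add_distrib] at hmain
  have : (∑ p ∈ P, Real.log p / p) * N ≤ (Real.log N + Real.log 4) * N := by nlinarith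
  exact le_of_mul_le_mul_right this hN'

/-- Each factor is at most `exp (2 / p)`, and `2 / p ≤ δ log p / p` once `p ≥ exp (2 / δ)`. -/
lemma euler_product_bound {δ : ℝ} (hδ : 0 < δ) :
    ∃ C : ℝ, 0 < C ∧ ∀ N : ℕ, 1 ≤ N →
      ∏ p ∈ (Finset.range (N + 1)).filter Nat.Prime, (1 - 1 / (p : ℝ))⁻¹ ≤ C * (N : ℝ) ^ δ := by
  obtain ⟨K, hK⟩ := exists_nat_ge (Real.exp (2 / δ))
  refine ⟨Real.exp (K + δ * Real.log 4), Real.exp_pos _, fun N hN => ?_⟩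
  have hN' : (0 : ℝ) < N := by exact_mod_cast hN
  set P := (Finset.range (N + 1)).filter Nat.Prime with hP
  have h1 : ∏ p ∈ P, (1 - 1 / (p : ℝ))⁻¹ ≤ ∏ p ∈ P, Real.exp (2 / p) := by
    refine Finset.prod_le_prod (fun p hp => ?_) fun p hp => ?_
    all_goals
      have h2 : (2 : ℝ) ≤ p := by exact_mod_cast (Finset.mem_filter.mp hp).2.two_le
      have h3 : 1 / (p : ℝ) ≤ 1 / 2 := by gcongr
    · exact inv_nonneg.mpr (by linarith)
    · have h4 : (1 - 1 / (p : ℝ))⁻¹ ≤ 2 / p + 1 := by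
        rw [inv_le_iff_one_le_mul₀ (by linarith)]
        have : 0 ≤ 1 / (p : ℝ) := by positivity
        have e : 2 / (p : ℝ) = 2 * (1 / p) := by ring
        rw [e]; nlinarith
      exact h4.trans (Real.add_one_le_exp _)
  refine h1.trans ?_
  rw [← Real.exp_sum, Real.rpow_def_of_pos hN', ← Real.exp_add]
  gcongr
  have h5 : ∀ p ∈ P, 2 / (p : ℝ) ≤ (if p < K then 1 else 0) + δ * (Real.log p / p) := by
    intro p hp
    have hp0 : (2 : ℝ) ≤ p := by exact_mod_cast (Finset.mem_filter.mp hp).2.two_le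
    have hl : 0 ≤ Real.log p := Real.log_natCast_nonneg p
    split_ifs with h
    · have : 2 / (p : ℝ) ≤ 1 := by rw [div_le_one (by linarith)]; exact hp0
      have : 0 ≤ δ * (Real.log p / p) := by positivity
      linarith
    · have h4 : (K : ℝ) ≤ p := by exact_mod_cast not_lt.mp h
      have h6 : 2 / δ ≤ Real.log p := by
        rw [Real.le_log_iff_exp_le (by linarith)]; linarith
      rw [div_le_iff₀ hδ] at h6
      rw [zero_add, ← mul_div_assoc]
      gcongr
      linarith
  refine (Finset.sum_le_sum h5).trans ?_
  rw [Finset.sum_add_distrib, ← Finset.mul_sum]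
  have h7 := sum_log_div_le N hN
  have h8 : ∑ p ∈ P, (if p < K then (1 : ℝ) else 0) ≤ K := by
    rw [Finset.sum_boole]
    have : (P.filter (· < K)).card ≤ (Finset.range K).card := Finset.card_le_card (by
      intro x hx; simp at hx ⊢; exact hx.2)
    simpa using this
  have := mul_le_mul_of_nonneg_left h7 hδ.le
  linarith

/-! ### Integers coprime to `q` in short intervals -/

lemma sum_moebius_div (q : ℕ) (hq : q ≠ 0) :
    ∑ d ∈ q.divisors, (ArithmeticFunction.moebius d : ℝ) / d = (q.totient : ℝ) / q := by
  have h := (ArithmeticFunction.sum_eq_iff_sum_mul_moebius_eq (R := ℝ)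
    (f := fun n => (n.totient : ℝ)) (g := fun n => (n : ℝ))).mp
    (fun n _ => by exact_mod_cast Nat.sum_totient n) q (Nat.pos_of_ne_zero hq)
  rw [Nat.sum_divisorsAntidiagonal
    (f := fun x y => (ArithmeticFunction.moebius x : ℝ) * (y : ℝ))] at h
  rw [← h, Finset.sum_div]
  refine Finset.sum_congr rfl fun d hd => ?_
  have hd' := Nat.dvd_of_mem_divisors hd
  have hd0 : (d : ℝ) ≠ 0 := by
    have := Nat.pos_of_mem_divisors hd
    positivity
  have hq0 : (q : ℝ) ≠ 0 := by exact_mod_cast hq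
  rw [Nat.cast_div hd' hd0]
  field_simp

lemma le_card_divisors_mul_totient (q : ℕ) (hq : q ≠ 0) :
    q ≤ q.divisors.card * q.totient := by
  conv_lhs => rw [← Nat.sum_totient q]
  rw [← smul_eq_mul]
  exact Finset.sum_le_card_nsmul _ _ _ fun d hd =>
    Nat.le_of_dvd (Nat.totient_pos.mpr (Nat.pos_of_ne_zero hq))
      (Nat.totient_dvd_of_dvd (Nat.dvd_of_mem_divisors hd))

/-- Möbius sieve: the main term is `(φ(q) / q) (B - A)`, bounded below through
`φ(q) / q ≥ 1 / τ(q)`, and each divisor of `q` contributes an error of at most `1`. -/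
lemma card_coprime_Ioc_ge (q A B : ℕ) (hq : q ≠ 0) (hAB : A ≤ B) :
    ((B : ℝ) - A) / q.divisors.card - q.divisors.card ≤
      (((Finset.Ioc A B).filter fun n => Nat.Coprime n q).card : ℝ) := by
  have h1 : (((Finset.Ioc A B).filter fun n => Nat.Coprime n q).card : ℝ) =
      ∑ d ∈ q.divisors, (ArithmeticFunction.moebius d : ℝ) *
        (((Finset.Ioc A B).filter fun n => d ∣ n).card : ℝ) := by
    have e : ∀ d ∈ q.divisors, (ArithmeticFunction.moebius d : ℝ) *
        (((Finset.Ioc A B).filter fun n => d ∣ n).card : ℝ) =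
        ∑ n ∈ Finset.Ioc A B, if d ∣ n then (ArithmeticFunction.moebius d : ℝ) else 0 := by
      intro d _
      rw [← Finset.sum_filter, Finset.sum_const, nsmul_eq_mul, mul_comm]
    rw [Finset.sum_congr rfl e, Finset.sum_comm, ← Finset.sum_boole]
    refine Finset.sum_congr rfl fun n _ => ?_
    have hg : n.gcd q ≠ 0 := (Nat.gcd_pos_of_pos_right n (Nat.pos_of_ne_zero hq)).ne'
    have hs : ∑ d ∈ (n.gcd q).divisors, ArithmeticFunction.moebius d =
        if n.gcd q = 1 then 1 else 0 := by
      rw [← ArithmeticFunction.coe_mul_zeta_apply, ArithmeticFunction.moebius_mul_coe_zeta,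
        ArithmeticFunction.one_apply]
    have e2 : q.divisors.filter (fun d => d ∣ n) = (n.gcd q).divisors := by
      ext d
      simp [Nat.dvd_gcd_iff, hq, hg, and_comm]
    rw [← Finset.sum_filter, e2]
    have : ((∑ d ∈ (n.gcd q).divisors, ArithmeticFunction.moebius d : ℤ) : ℝ) =
        if n.gcd q = 1 then 1 else 0 := by rw [hs]; push_cast; rfl
    push_cast at this
    rw [this]
  have h2 : ∀ d ∈ q.divisors, (ArithmeticFunction.moebius d : ℝ) / d * ((B : ℝ) - A) - 1 ≤
      (ArithmeticFunction.moebius d : ℝ) *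
        (((Finset.Ioc A B).filter fun n => d ∣ n).card : ℝ) := by
    intro d hd
    have hd0 : (0 : ℝ) < d := by exact_mod_cast Nat.pos_of_mem_divisors hd
    have hc : (((Finset.Ioc A B).filter fun n => d ∣ n).card : ℝ) =
        (⌊(B : ℝ) / d⌋₊ : ℝ) - ⌊(A : ℝ) / d⌋₊ := by
      have hsplit : ((Finset.Ioc 0 B).filter fun n => d ∣ n).card =
          ((Finset.Ioc 0 A).filter fun n => d ∣ n).card +
          ((Finset.Ioc A B).filter fun n => d ∣ n).card := by
        rw [← Finset.card_union_of_disjoint, ← Finset.filter_union,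
          Finset.Ioc_union_Ioc_eq_Ioc (Nat.zero_le _) hAB]
        refine Finset.disjoint_filter_filter (Finset.Ioc_disjoint_Ioc_of_le le_rfl)
      rw [Nat.Ioc_filter_dvd_card_eq_div, Nat.Ioc_filter_dvd_card_eq_div] at hsplit
      rw [Nat.floor_div_eq_div, Nat.floor_div_eq_div, hsplit]
      push_cast; ring
    rw [hc]
    have b1 := Nat.lt_floor_add_one ((B : ℝ) / d)
    have b2 := Nat.floor_le (show (0 : ℝ) ≤ (B : ℝ) / d by positivity)
    have a1 := Nat.lt_floor_add_one ((A : ℝ) / d)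
    have a2 := Nat.floor_le (show (0 : ℝ) ≤ (A : ℝ) / d by positivity)
    have e : (ArithmeticFunction.moebius d : ℝ) / d * ((B : ℝ) - A) =
      ArithmeticFunction.moebius d * ((B : ℝ) / d - A / d) := by ring
    rw [e]
    have hm := ArithmeticFunction.abs_moebius_le_one (n := d)
    have hm' : |(ArithmeticFunction.moebius d : ℝ)| ≤ 1 := by exact_mod_cast hm
    obtain ⟨m1, m2⟩ := abs_le.mp hm'
    have habs : |(ArithmeticFunction.moebius d : ℝ) *
        (((B : ℝ) / d - A / d) - ((⌊(B : ℝ) / d⌋₊ : ℝ) - ⌊(A : ℝ) / d⌋₊))| ≤ 1 * 1 := by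
      rw [abs_mul]
      refine mul_le_mul hm' ?_ (abs_nonneg _) zero_le_one
      rw [abs_le]; constructor <;> linarith
    have := (abs_le.mp habs).2
    linarith
  rw [h1]
  refine le_trans ?_ (Finset.sum_le_sum h2)
  rw [Finset.sum_sub_distrib, ← Finset.sum_mul, sum_moebius_div q hq]
  simp only [Finset.sum_const, nsmul_eq_mul, mul_one]
  have hq0 : (0 : ℝ) < q := by exact_mod_cast Nat.pos_of_ne_zero hq
  have hAB' : (0 : ℝ) ≤ (B : ℝ) - A := by
    have : (A : ℝ) ≤ B := by exact_mod_cast hAB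
    linarith
  have hτ : (0 : ℝ) < q.divisors.card := by
    exact_mod_cast Finset.card_pos.mpr ⟨1, by simp [hq]⟩
  have h3 : (1 : ℝ) / q.divisors.card ≤ (q.totient : ℝ) / q := by
    rw [div_le_div_iff₀ hτ hq0, one_mul, mul_comm]
    exact_mod_cast le_card_divisors_mul_totient q hq
  have := mul_le_mul_of_nonneg_right h3 hAB'
  have e : ((B : ℝ) - A) / q.divisors.card = 1 / q.divisors.card * ((B : ℝ) - A) := by ring
  linarith

/-! ### Integers in a residue class with a large square divisor -/

/-- The residue class is fixed modulo `q` and modulo `r ^ 2`, and these moduli are coprime because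
`a` is a unit, so the integers counted lie in a single class modulo `q * r ^ 2`. -/
lemma card_modEq_sq_dvd_le (q r N : ℕ) (hq : 1 < q) (hr : 0 < r) (a : (ZMod q)ˣ) :
    ((((Finset.range (N + 1)).filter
      fun m : ℕ => (m : ZMod q) = (a : ZMod q) ∧ r ^ 2 ∣ m).card : ℕ) : ℝ) ≤
      N / q * ((r : ℝ) ^ 2)⁻¹ + 2 := by
  rcases Finset.eq_empty_or_nonempty ((Finset.range (N + 1)).filter
      fun m : ℕ => (m : ZMod q) = (a : ZMod q) ∧ r ^ 2 ∣ m) with h | ⟨v, hv⟩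
  · rw [h, Finset.card_empty]; push_cast; positivity
  obtain ⟨-, hva, hvr⟩ := Finset.mem_filter.mp hv
  have hcop : Nat.Coprime q (r ^ 2) := by
    have h1 : Nat.Coprime v q := by
      rw [← ZMod.isUnit_iff_coprime, hva]; exact a.isUnit
    exact (Nat.Coprime.coprime_dvd_left hvr h1).symm
  have hpos : 0 < q * r ^ 2 := by positivity
  have hsub : ((Finset.range (N + 1)).filter
      fun m : ℕ => (m : ZMod q) = (a : ZMod q) ∧ r ^ 2 ∣ m) ⊆
      (Finset.range (N + 1)).filter fun m : ℕ => m ≡ v [MOD q * r ^ 2] := by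
    intro m hm
    obtain ⟨hm0, hma, hmr⟩ := Finset.mem_filter.mp hm
    refine Finset.mem_filter.mpr ⟨hm0, ?_⟩
    rw [← Nat.modEq_and_modEq_iff_modEq_mul hcop]
    refine ⟨(ZMod.natCast_eq_natCast_iff _ _ _).mp (hma.trans hva.symm), ?_⟩
    exact ((Nat.modEq_zero_iff_dvd).mpr hmr).trans ((Nat.modEq_zero_iff_dvd).mpr hvr).symm
  have h1 := Finset.card_le_card hsub
  have h2 := Nat.count_modEq_card (N + 1) hpos v
  rw [Nat.count_eq_card_filter_range] at h2
  have h2' : ((Finset.range (N + 1)).filter fun m : ℕ => m ≡ v [MOD q * r ^ 2]).card ≤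
      (N + 1) / (q * r ^ 2) + 1 := by
    convert! h2.le.trans ?_
    split_ifs <;> omega
  have h3 : (((N + 1) / (q * r ^ 2) : ℕ) : ℝ) ≤ ((N + 1 : ℕ) : ℝ) / ((q * r ^ 2 : ℕ) : ℝ) :=
    Nat.cast_div_le
  have h4 : ((((Finset.range (N + 1)).filter
      fun m : ℕ => (m : ZMod q) = (a : ZMod q) ∧ r ^ 2 ∣ m).card : ℕ) : ℝ) ≤
      (((N + 1) / (q * r ^ 2) : ℕ) : ℝ) + 1 := by exact_mod_cast h1.trans h2'
  refine h4.trans ?_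
  have h5 : (1 : ℝ) / ((q * r ^ 2 : ℕ) : ℝ) ≤ 1 := by
    rw [div_le_one (by exact_mod_cast hpos)]; exact_mod_cast hpos
  have h6 : ((N + 1 : ℕ) : ℝ) / ((q * r ^ 2 : ℕ) : ℝ) =
      N / q * ((r : ℝ) ^ 2)⁻¹ + 1 / ((q * r ^ 2 : ℕ) : ℝ) := by
    push_cast
    have : (0 : ℝ) < q := by positivity
    have : (0 : ℝ) < r := by positivity
    field_simp
  linarith

/-- The integers `m ≤ X` congruent to `a` modulo `q` that are divisible by `r ^ 2` for some
integer `r ∈ (Y, W]`. -/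
def badSet (q : ℕ) (a : (ZMod q)ˣ) (X Y W : ℝ) : Finset ℕ :=
  (Finset.range (⌊X⌋₊ + 1)).filter fun m : ℕ =>
    (m : ZMod q) = (a : ZMod q) ∧ ∃ r : ℕ, Y < (r : ℝ) ∧ (r : ℝ) ≤ W ∧ r ^ 2 ∣ m

lemma card_badSet_le (q : ℕ) (hq : 1 < q) (a : (ZMod q)ˣ) {X Y W : ℝ} (hX : 0 ≤ X) (hY : 0 < Y)
    (hW : 0 ≤ W) :
    ((badSet q a X Y W).card : ℝ) ≤ X / q * (2 / Y) + 2 * W := by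
  have hsub : badSet q a X Y W ⊆ (Finset.Ioo ⌊Y⌋₊ (⌊W⌋₊ + 1)).biUnion fun r =>
      (Finset.range (⌊X⌋₊ + 1)).filter
        fun m : ℕ => (m : ZMod q) = (a : ZMod q) ∧ r ^ 2 ∣ m := by
    intro m hm
    obtain ⟨hm0, hma, r, hr1, hr2, hr3⟩ := Finset.mem_filter.mp hm
    refine Finset.mem_biUnion.mpr ⟨r, Finset.mem_Ioo.mpr ⟨?_, ?_⟩, Finset.mem_filter.mpr
      ⟨hm0, hma, hr3⟩⟩
    · exact (Nat.floor_lt hY.le).mpr hr1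
    · exact Nat.lt_succ_of_le (Nat.le_floor hr2)
  have h1 : ((badSet q a X Y W).card : ℝ) ≤ ∑ r ∈ Finset.Ioo ⌊Y⌋₊ (⌊W⌋₊ + 1),
      (X / q * ((r : ℝ) ^ 2)⁻¹ + 2) := by
    have h2 := (Finset.card_le_card hsub).trans Finset.card_biUnion_le
    have h3 : ((badSet q a X Y W).card : ℝ) ≤ ∑ r ∈ Finset.Ioo ⌊Y⌋₊ (⌊W⌋₊ + 1),
      ((((Finset.range (⌊X⌋₊ + 1)).filter
        fun m : ℕ => (m : ZMod q) = (a : ZMod q) ∧ r ^ 2 ∣ m).card : ℕ) : ℝ) := by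
      exact_mod_cast h2
    refine h3.trans (Finset.sum_le_sum fun r hr => ?_)
    refine (card_modEq_sq_dvd_le q r ⌊X⌋₊ hq ?_ a).trans ?_
    · exact (Nat.zero_le _).trans_lt (Finset.mem_Ioo.mp hr).1
    · have := Nat.floor_le hX
      gcongr
  refine h1.trans ?_
  rw [Finset.sum_add_distrib, ← Finset.mul_sum]
  have h4 := sum_Ioo_inv_sq_le (α := ℝ) ⌊Y⌋₊ (⌊W⌋₊ + 1)
  have h5 : (2 : ℝ) / (⌊Y⌋₊ + 1) ≤ 2 / Y := by
    have := (Nat.lt_floor_add_one Y).le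
    gcongr
  have h6 : ∑ r ∈ Finset.Ioo ⌊Y⌋₊ (⌊W⌋₊ + 1), (2 : ℝ) ≤ 2 * W := by
    rw [Finset.sum_const, nsmul_eq_mul, Nat.card_Ioo, mul_comm]
    have h7 : ((⌊W⌋₊ + 1 - ⌊Y⌋₊ - 1 : ℕ) : ℝ) ≤ ⌊W⌋₊ := by
      exact_mod_cast (by omega)
    have := Nat.floor_le hW
    linarith
  have h8 : X / q * ∑ r ∈ Finset.Ioo ⌊Y⌋₊ (⌊W⌋₊ + 1), ((r : ℝ) ^ 2)⁻¹ ≤ X / q * (2 / Y) :=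
    mul_le_mul_of_nonneg_left (h4.trans h5) (by positivity)
  linarith

/-! ### The contributing tuples -/

lemma mertensFactor_nonneg (q : ℕ) (z : ℝ) : 0 ≤ mertensFactor q z := by
  refine Finset.prod_nonneg fun p hp => inv_nonneg.mpr ?_
  have h2 : (2 : ℝ) ≤ p := by exact_mod_cast (Finset.mem_filter.mp hp).2.1.two_le
  have h3 : 1 / (p : ℝ) ≤ 1 / 2 := by gcongr
  linarith

/-- What a nonzero value of `f^Δ` says about its argument; the gcd condition is restated as the
absence of prime factors below `q ^ √ε`. -/
lemma fE_ne_zero {q : ℕ} {ε : ℝ} {h : ℕ → ℝ} {Δ : ℝ} {n : ℕ} (hn : fE q ε h Δ n ≠ 0) :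
    0 < Δ * h n ∧ n ≠ 0 ∧ (n : ℝ) ≤ (q : ℝ) ^ ((1 : ℝ) / 2) ∧
      ∀ r : ℕ, r.Prime → (r : ℝ) < (q : ℝ) ^ Real.sqrt ε → ¬ r ∣ n := by
  unfold fE at hn
  split_ifs at hn with hc
  swap
  · simp at hn
  obtain ⟨h1, h2, h3⟩ := hc
  obtain ⟨h4, h5, -⟩ := Finset.mem_filter.mp h3
  refine ⟨h1, ?_, ?_, ?_⟩
  · rintro rfl
    have : 0 ≤ (q : ℝ) ^ ((1 : ℝ) / 2) / Real.exp 1 := by positivity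
    push_cast at h5
    linarith
  · have := Finset.mem_range.mp h4
    exact (Nat.le_floor_iff (by positivity)).mp (by omega)
  · intro r hr hrz hrn
    have hrP : r ∣ primorialLT ((q : ℝ) ^ Real.sqrt ε) :=
      Finset.dvd_prod_of_mem (fun p => p)
        (Finset.mem_filter.mpr ⟨Finset.mem_range.mpr (Nat.lt_ceil.mpr hrz), hr⟩)
    have := Nat.dvd_gcd hrn hrP
    rw [h2] at this
    exact hr.one_lt.ne' (Nat.dvd_one.mp this)

/-- A non-squarefree product of admissible factors is divisible by the square of a prime
`r ∈ (q ^ ε / e, q ^ (1/2)]`: a smaller prime divides neither the `nᵢ`, which are rough, nor `p`,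
which is a larger prime, and divides the squarefree `u` at most once; a larger prime divides none
of the factors. The primality of `r` is dropped from the conclusion, where it is not needed. -/
lemma exists_large_sq_dvd {q : ℕ} (hq : 1 < q) {ε : ℝ} (hε : 0 < ε) (hε' : ε ≤ 1 / 2)
    {n₁ n₂ n₃ p u : ℕ} (hp : p.Prime) (hu : Squarefree u)
    (h₁ : n₁ ≠ 0) (h₂ : n₂ ≠ 0) (h₃ : n₃ ≠ 0)
    (b₁ : (n₁ : ℝ) ≤ (q : ℝ) ^ ((1 : ℝ) / 2)) (b₂ : (n₂ : ℝ) ≤ (q : ℝ) ^ ((1 : ℝ) / 2))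
    (b₃ : (n₃ : ℝ) ≤ (q : ℝ) ^ ((1 : ℝ) / 2)) (bu : (u : ℝ) ≤ (q : ℝ) ^ ((1 : ℝ) / 2))
    (r₁ : ∀ r : ℕ, r.Prime → (r : ℝ) < (q : ℝ) ^ Real.sqrt ε → ¬ r ∣ n₁)
    (r₂ : ∀ r : ℕ, r.Prime → (r : ℝ) < (q : ℝ) ^ Real.sqrt ε → ¬ r ∣ n₂)
    (r₃ : ∀ r : ℕ, r.Prime → (r : ℝ) < (q : ℝ) ^ Real.sqrt ε → ¬ r ∣ n₃)
    (hp1 : (q : ℝ) ^ ε / Real.exp 1 < p) (hp2 : (p : ℝ) ≤ (q : ℝ) ^ ε)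
    (hns : ¬ Squarefree (n₁ * n₂ * n₃ * p * u)) :
    ∃ r : ℕ, (q : ℝ) ^ ε / Real.exp 1 < (r : ℝ) ∧ (r : ℝ) ≤ (q : ℝ) ^ ((1 : ℝ) / 2) ∧
      r ^ 2 ∣ n₁ * n₂ * n₃ * p * u := by
  have hq1 : (1 : ℝ) < q := by exact_mod_cast hq
  rw [Nat.squarefree_iff_prime_squarefree] at hns
  push Not at hns
  obtain ⟨r, hr, hrd⟩ := hns
  refine ⟨r, ?_, ?_, by rwa [pow_two]⟩
  · by_contra! hle
    have hz : (r : ℝ) < (q : ℝ) ^ Real.sqrt ε := by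
      have e1 : ε ≤ Real.sqrt ε := Real.le_sqrt_of_sq_le (by nlinarith)
      have e2 : (q : ℝ) ^ ε ≤ (q : ℝ) ^ Real.sqrt ε :=
        Real.rpow_le_rpow_of_exponent_le hq1.le e1
      linarith
    have hrp : ¬ r ∣ p := by
      intro hd
      have := (Nat.prime_dvd_prime_iff_eq hr hp).mp hd
      rw [this] at hle
      linarith
    have hcop : Nat.Coprime (r * r) (n₁ * n₂ * n₃ * p) := by
      have c : ∀ n, ¬ r ∣ n → Nat.Coprime (r * r) n := fun n hn =>
        Nat.Coprime.mul_left ((hr.coprime_iff_not_dvd).mpr hn) ((hr.coprime_iff_not_dvd).mpr hn)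
      exact (((c _ (r₁ r hr hz)).mul_right (c _ (r₂ r hr hz))).mul_right
        (c _ (r₃ r hr hz))).mul_right (c _ hrp)
    have := hcop.dvd_of_dvd_mul_left hrd
    exact (Nat.squarefree_iff_prime_squarefree.mp hu) r hr this
  · have hpR : (p : ℝ) ≤ (q : ℝ) ^ ((1 : ℝ) / 2) :=
      hp2.trans (Real.rpow_le_rpow_of_exponent_le hq1.le hε')
    have c : ∀ n : ℕ, n ≠ 0 → (n : ℝ) ≤ (q : ℝ) ^ ((1 : ℝ) / 2) → r ∣ n →
        (r : ℝ) ≤ (q : ℝ) ^ ((1 : ℝ) / 2) := fun n hn hb hd =>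
      le_trans (by exact_mod_cast Nat.le_of_dvd (Nat.pos_of_ne_zero hn) hd) hb
    have hd : r ∣ n₁ * n₂ * n₃ * p * u := (Dvd.intro _ rfl).trans hrd
    rw [hr.dvd_mul, hr.dvd_mul, hr.dvd_mul, hr.dvd_mul] at hd
    rcases hd with (((hd | hd) | hd) | hd) | hd
    · exact c _ h₁ b₁ hd
    · exact c _ h₂ b₂ hd
    · exact c _ h₃ b₃ hd
    · exact c _ hp.ne_zero hpR hd
    · exact c _ hu.ne_zero bu hd

lemma sign_of_squarefree {h : ℕ → ℝ} (hm : IsMultFn h) {Δ₁ Δ₂ Δ₃ : ℝ}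
    (hΔ : Δ₁ = 1 ∨ Δ₁ = -1) {n₁ n₂ n₃ p u : ℕ}
    (s₁ : 0 < Δ₁ * h n₁) (s₂ : 0 < Δ₁ * h n₂) (s₃ : 0 < Δ₁ * h n₃) (sp : 0 < Δ₂ * h p)
    (su : 0 < Δ₃ * h u) (hsq : Squarefree (n₁ * n₂ * n₃ * p * u)) :
    0 < Δ₁ * Δ₂ * Δ₃ * h (n₁ * n₂ * n₃ * p * u) := by
  obtain ⟨c1, hsq, -⟩ := Nat.squarefree_mul_iff.mp hsq
  obtain ⟨c2, hsq, -⟩ := Nat.squarefree_mul_iff.mp hsq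
  obtain ⟨c3, hsq, -⟩ := Nat.squarefree_mul_iff.mp hsq
  obtain ⟨c4, hsq, -⟩ := Nat.squarefree_mul_iff.mp hsq
  rw [hm.2 _ _ c1, hm.2 _ _ c2, hm.2 _ _ c3, hm.2 _ _ c4]
  have hsq1 : Δ₁ ^ 2 = 1 := by rcases hΔ with rfl | rfl <;> norm_num
  have : Δ₁ * Δ₂ * Δ₃ * (h n₁ * h n₂ * h n₃ * h p * h u) =
      (Δ₁ * h n₁) * (Δ₁ * h n₂) * (Δ₁ * h n₃) * (Δ₂ * h p) * (Δ₃ * h u) := by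
    linear_combination (-Δ₁ * Δ₂ * Δ₃ * (h n₁ * h n₂ * h n₃ * h p * h u)) * hsq1
  rw [this]
  positivity

/-- If `a` is not represented, every contributing product is non-squarefree, hence lies in
`badSet`, and each element of `badSet` has at most `T ^ 5` factorizations. -/
lemma conv5Sum_le {q : ℕ} (hq : 1 < q) {ε : ℝ} (hε : 0 < ε) (hε' : ε ≤ 1 / 2) {h : ℕ → ℝ}
    (hm : IsMultFn h) (B₂ B₃ : Set ((ZMod q)ˣ)) {Δ₁ Δ₂ Δ₃ : ℝ} (hΔ : Δ₁ = 1 ∨ Δ₁ = -1)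
    {a : (ZMod q)ˣ} (ha : a ∉ EhSet q h (Δ₁ * Δ₂ * Δ₃) ((q : ℝ) ^ (2 + ε))) {T M : ℝ}
    (hT : ∀ m : ℕ, m ≠ 0 → (m : ℝ) ≤ (q : ℝ) ^ (2 + ε) → (m.divisors.card : ℝ) ≤ T)
    (hM : mertensFactor q ((q : ℝ) ^ Real.sqrt ε) ≤ M) :
    conv5Sum q (fE q ε h Δ₁) (fE q ε h Δ₁) (fE q ε h Δ₁)
      (ind (QE q ε h B₂ Δ₂)) (ind (UE q h B₃ Δ₃)) ((a : (ZMod q)ˣ) : ZMod q) ≤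
    ((badSet q a ((q : ℝ) ^ (2 + ε)) ((q : ℝ) ^ ε / Real.exp 1)
      ((q : ℝ) ^ ((1 : ℝ) / 2))).card : ℝ) * T ^ 5 * M ^ 3 := by
  have hq1 : (1 : ℝ) < q := by exact_mod_cast hq
  have hM0 := (mertensFactor_nonneg q ((q : ℝ) ^ Real.sqrt ε)).trans hM
  set bad := badSet q a ((q : ℝ) ^ (2 + ε)) ((q : ℝ) ^ ε / Real.exp 1)
      ((q : ℝ) ^ ((1 : ℝ) / 2)) with hbad
  set A : Finset (ℕ × ℕ × ℕ × ℕ × ℕ) := bad.biUnion fun m =>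
    m.divisors ×ˢ m.divisors ×ˢ m.divisors ×ˢ m.divisors ×ˢ m.divisors with hA
  have hbad0 : ∀ m ∈ bad, m ≠ 0 ∧ (m : ℝ) ≤ (q : ℝ) ^ (2 + ε) := by
    intro m hmb
    obtain ⟨hm1, hm2, -⟩ := Finset.mem_filter.mp hmb
    constructor
    · rintro rfl
      have : Fact (1 < q) := ⟨hq⟩
      exact a.ne_zero (by rw [← hm2]; simp)
    · have := Finset.mem_range.mp hm1
      exact (Nat.le_floor_iff (by positivity)).mp (by omega)
  have hcard : (A.card : ℝ) ≤ bad.card * T ^ 5 := by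
    have h1 : (A.card : ℝ) ≤ ∑ m ∈ bad, (m.divisors.card : ℝ) ^ 5 := by
      have : A.card ≤ ∑ m ∈ bad, m.divisors.card ^ 5 := by
        refine Finset.card_biUnion_le.trans (Finset.sum_le_sum fun m _ => ?_)
        simp only [Finset.card_product]
        exact le_of_eq (by ring)
      exact_mod_cast this
    refine h1.trans ?_
    rw [← nsmul_eq_mul]
    refine Finset.sum_le_card_nsmul _ _ _ fun m hmb => ?_
    have := hT m (hbad0 m hmb).1 (hbad0 m hmb).2
    gcongr
  have hfle : ∀ n, fE q ε h Δ₁ n ≤ M := by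
    intro n
    unfold fE
    split_ifs
    · simpa using hM
    · simpa using hM0
  have hf0 : ∀ n, 0 ≤ fE q ε h Δ₁ n := by
    intro n
    unfold fE
    exact mul_nonneg (mertensFactor_nonneg _ _) (by split_ifs <;> norm_num)
  have hind : ∀ (S : Set ℕ) (n : ℕ), 0 ≤ ind S n ∧ ind S n ≤ 1 := by
    intro S n
    unfold ind
    split_ifs <;> norm_num
  unfold conv5Sum
  rw [finsum_eq_sum_of_support_subset (s := A)]
  · have hterm : ∀ t ∈ A, (if ((t.1 * t.2.1 * t.2.2.1 * t.2.2.2.1 * t.2.2.2.2 : ℕ) : ZMod q) =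
          (a : ZMod q) then
        fE q ε h Δ₁ t.1 * fE q ε h Δ₁ t.2.1 * fE q ε h Δ₁ t.2.2.1 *
          ind (QE q ε h B₂ Δ₂) t.2.2.2.1 * ind (UE q h B₃ Δ₃) t.2.2.2.2 else 0) ≤ M ^ 3 := by
      intro t _
      split_ifs
      · have e : M ^ 3 = M * M * M * 1 * 1 := by ring
        rw [e]
        gcongr
        · have := hf0 t.1; have := hf0 t.2.1; have := hf0 t.2.2.1
          have := (hind (QE q ε h B₂ Δ₂) t.2.2.2.1).1
          exact (hind _ _).1
        · exact (hind _ _).1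
        · exact hf0 _
        · exact hf0 _
        · exact hfle _
        · exact hfle _
        · exact hfle _
        · exact (hind _ _).2
        · exact (hind _ _).2
      · positivity
    refine (Finset.sum_le_card_nsmul _ _ _ hterm).trans ?_
    rw [nsmul_eq_mul]
    gcongr
  · rintro ⟨n₁, n₂, n₃, p, u⟩ ht
    rw [Function.mem_support] at ht
    simp only at ht
    split_ifs at ht with hta
    swap
    · exact absurd rfl ht
    obtain ⟨ht, htu⟩ := ne_zero_and_ne_zero_of_mul ht
    obtain ⟨ht, htp⟩ := ne_zero_and_ne_zero_of_mul ht
    obtain ⟨ht, ht3⟩ := ne_zero_and_ne_zero_of_mul ht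
    obtain ⟨ht1, ht2⟩ := ne_zero_and_ne_zero_of_mul ht
    obtain ⟨s₁, z₁, b₁, r₁⟩ := fE_ne_zero ht1
    obtain ⟨s₂, z₂, b₂, r₂⟩ := fE_ne_zero ht2
    obtain ⟨s₃, z₃, b₃, r₃⟩ := fE_ne_zero ht3
    have hpQ : p ∈ QE q ε h B₂ Δ₂ := by
      by_contra hc; exact htp (if_neg hc)
    have huU : u ∈ UE q h B₃ Δ₃ := by
      by_contra hc; exact htu (if_neg hc)
    obtain ⟨hp, hp1, hp2, -, sp⟩ := hpQ
    obtain ⟨bu, husq, -, su⟩ := huU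
    have hle : ((n₁ * n₂ * n₃ * p * u : ℕ) : ℝ) ≤ (q : ℝ) ^ (2 + ε) := by
      have e : (q : ℝ) ^ (2 + ε) = (q : ℝ) ^ ((1 : ℝ) / 2) * (q : ℝ) ^ ((1 : ℝ) / 2) *
          (q : ℝ) ^ ((1 : ℝ) / 2) * (q : ℝ) ^ ε * (q : ℝ) ^ ((1 : ℝ) / 2) := by
        have hq0 : (0 : ℝ) < q := by linarith
        simp only [← Real.rpow_add hq0]
        congr 1; ring
      rw [e]
      push_cast
      gcongr
    have hns : ¬ Squarefree (n₁ * n₂ * n₃ * p * u) := fun hsq =>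
      ha ⟨_, hsq, hle, hta, sign_of_squarefree hm hΔ s₁ s₂ s₃ sp su hsq⟩
    have hex := exists_large_sq_dvd hq hε hε' hp husq z₁ z₂ z₃ b₁ b₂ b₃ bu r₁ r₂ r₃ hp1 hp2 hns
    have hmem : n₁ * n₂ * n₃ * p * u ∈ bad :=
      Finset.mem_filter.mpr ⟨Finset.mem_range.mpr (Nat.lt_succ_of_le (Nat.le_floor hle)), hta, hex⟩
    have hne := (hbad0 _ hmem).1
    rw [hA]
    refine Finset.mem_coe.mpr (Finset.mem_biUnion.mpr ⟨_, hmem, ?_⟩)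
    simp only [Finset.mem_product, Nat.mem_divisors]
    exact ⟨⟨⟨n₂ * n₃ * p * u, by ring⟩, hne⟩, ⟨⟨n₁ * n₃ * p * u, by ring⟩, hne⟩,
      ⟨⟨n₁ * n₂ * p * u, by ring⟩, hne⟩, ⟨⟨n₁ * n₂ * n₃ * u, by ring⟩, hne⟩,
      ⟨⟨n₁ * n₂ * n₃ * p, by ring⟩, hne⟩⟩

/-! ### Estimates for large `q` -/

lemma eventually_const_le_rpow (C : ℝ) {δ : ℝ} (hδ : 0 < δ) :
    ∀ᶠ q : ℕ in Filter.atTop, C ≤ (q : ℝ) ^ δ :=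
  ((tendsto_rpow_atTop hδ).comp tendsto_natCast_atTop_atTop).eventually_ge_atTop C

lemma eventually_divisors_le {δ : ℝ} (hδ : 0 < δ) :
    ∀ᶠ q : ℕ in Filter.atTop, ∀ m : ℕ, m ≠ 0 → (m : ℝ) ≤ (q : ℝ) ^ (3 : ℝ) →
      (m.divisors.card : ℝ) ≤ (q : ℝ) ^ δ := by
  obtain ⟨C, hC, hCb⟩ := divisor_bound (show 0 < δ / 6 by positivity)
  filter_upwards [eventually_const_le_rpow C (show 0 < δ / 2 by positivity),
    Filter.eventually_gt_atTop 0] with q hq hq0 m hm hmq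
  have hq0' : (0 : ℝ) < q := by exact_mod_cast hq0
  calc (m.divisors.card : ℝ) ≤ C * (m : ℝ) ^ (δ / 6) := hCb m hm
    _ ≤ (q : ℝ) ^ (δ / 2) * ((q : ℝ) ^ (3 : ℝ)) ^ (δ / 6) := by gcongr
    _ = (q : ℝ) ^ δ := by
      rw [← Real.rpow_mul hq0'.le, ← Real.rpow_add hq0']
      congr 1; ring

lemma eventually_mertensFactor_le {ε δ : ℝ} (hε' : ε ≤ 1) (hδ : 0 < δ) :
    ∀ᶠ q : ℕ in Filter.atTop,
      mertensFactor q ((q : ℝ) ^ Real.sqrt ε) ≤ (q : ℝ) ^ δ := by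
  obtain ⟨C, hC, hCb⟩ := euler_product_bound (show 0 < δ / 2 by positivity)
  filter_upwards [eventually_const_le_rpow (C * 2 ^ (δ / 2)) (show 0 < δ / 2 by positivity),
    Filter.eventually_gt_atTop 1] with q hq hq0
  have hq1 : (1 : ℝ) < q := by exact_mod_cast hq0
  set z : ℝ := (q : ℝ) ^ Real.sqrt ε with hz
  have hz1 : 1 ≤ z := Real.one_le_rpow hq1.le (Real.sqrt_nonneg _)
  have hzq : z ≤ q := by
    calc z ≤ (q : ℝ) ^ (1 : ℝ) :=
          Real.rpow_le_rpow_of_exponent_le hq1.le (Real.sqrt_le_one.mpr hε')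
      _ = q := Real.rpow_one _
  have hN : 1 ≤ ⌈z⌉₊ := Nat.one_le_ceil_iff.mpr (by linarith)
  have hN2 : (⌈z⌉₊ : ℝ) ≤ 2 * q := by
    have := (Nat.ceil_lt_add_one (show 0 ≤ z by linarith)).le
    linarith
  have hfac : ∀ p : ℕ, p.Prime → 1 ≤ (1 - 1 / (p : ℝ))⁻¹ := by
    intro p hp
    have h2 : (2 : ℝ) ≤ p := by exact_mod_cast hp.two_le
    have h3 : 1 / (p : ℝ) ≤ 1 / 2 := by gcongr
    have h4 : 0 ≤ 1 / (p : ℝ) := by positivity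
    exact (one_le_inv₀ (by linarith)).mpr (by linarith)
  calc mertensFactor q z
      ≤ ∏ p ∈ (Finset.range (⌈z⌉₊ + 1)).filter Nat.Prime, (1 - 1 / (p : ℝ))⁻¹ := by
        unfold mertensFactor
        refine Finset.prod_le_prod_of_subset_of_one_le ?_ ?_ ?_
        · intro p hp
          simp only [Finset.mem_filter, Finset.mem_range] at hp ⊢
          exact ⟨by omega, hp.2.1⟩
        · intro p hp
          exact zero_le_one.trans (hfac p (Finset.mem_filter.mp hp).2.1)
        · intro p hp _
          exact hfac p (Finset.mem_filter.mp hp).2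
    _ ≤ C * (⌈z⌉₊ : ℝ) ^ (δ / 2) := hCb _ hN
    _ ≤ C * (2 * (q : ℝ)) ^ (δ / 2) := by gcongr
    _ = (C * 2 ^ (δ / 2)) * (q : ℝ) ^ (δ / 2) := by
        rw [Real.mul_rpow (by norm_num) (by positivity)]; ring
    _ ≤ (q : ℝ) ^ (δ / 2) * (q : ℝ) ^ (δ / 2) := by gcongr
    _ = (q : ℝ) ^ δ := by
        rw [← Real.rpow_add (by linarith)]; congr 1; ring

lemma eventually_card_IqE_ge {δ : ℝ} (hδ : 0 < δ) (hδ' : δ ≤ 1 / 3) :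
    ∀ᶠ q : ℕ in Filter.atTop, (q : ℝ) ^ ((1 : ℝ) / 2 - δ) ≤ ((IqE q).card : ℝ) := by
  obtain ⟨C, hC, hCb⟩ := divisor_bound (show 0 < δ / 2 by positivity)
  filter_upwards [eventually_const_le_rpow (4 * C) (show 0 < δ / 2 by positivity),
    eventually_const_le_rpow (4 * C ^ 2) (show 0 < δ / 2 by positivity),
    eventually_const_le_rpow 8 (show (0 : ℝ) < 1 / 2 by norm_num),
    Filter.eventually_gt_atTop 1] with q hq1 hq2 hq3 hq0
  have hqr : (1 : ℝ) < q := by exact_mod_cast hq0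
  have hq0' : (0 : ℝ) < q := by linarith
  -- With `x = q ^ (δ / 2)` the sieve bound is `R / (2 C x) - C x`, to be compared with `R / x ^ 2`.
  set R : ℝ := (q : ℝ) ^ ((1 : ℝ) / 2) with hR
  set x : ℝ := (q : ℝ) ^ (δ / 2) with hx
  have hxpos : 0 < x := by positivity
  have hRx : x ^ 3 ≤ R := by
    rw [hx, ← Real.rpow_natCast, ← Real.rpow_mul hq0'.le]
    refine Real.rpow_le_rpow_of_exponent_le hqr.le ?_
    push_cast; linarith
  have hgoal : (q : ℝ) ^ ((1 : ℝ) / 2 - δ) = R / x ^ 2 := by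
    rw [Real.rpow_sub hq0', hx, ← Real.rpow_natCast, ← Real.rpow_mul hq0'.le]
    congr 2; push_cast; ring
  have he : R / Real.exp 1 ≤ R * (3 / 8) := by
    have h1 : (2.7182818283 : ℝ) < Real.exp 1 := Real.exp_one_gt_d9
    rw [div_le_iff₀ (by positivity)]
    nlinarith
  have hRe : 0 ≤ R / Real.exp 1 := by positivity
  have hAB : ⌊R / Real.exp 1⌋₊ ≤ ⌊R⌋₊ := Nat.floor_le_floor (by linarith)
  have hsub : ((Finset.Ioc ⌊R / Real.exp 1⌋₊ ⌊R⌋₊).filter fun n => Nat.Coprime n q) ⊆ IqE q := by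
    intro n hn
    obtain ⟨hn1, hn2⟩ := Finset.mem_filter.mp hn
    obtain ⟨hn3, hn4⟩ := Finset.mem_Ioc.mp hn1
    exact Finset.mem_filter.mpr ⟨Finset.mem_range.mpr (Nat.lt_succ_of_le hn4),
      (Nat.floor_lt hRe).mp hn3, hn2⟩
  have h1 := card_coprime_Ioc_ge q _ _ (by omega) hAB
  have h2 : (((Finset.Ioc ⌊R / Real.exp 1⌋₊ ⌊R⌋₊).filter fun n => Nat.Coprime n q).card : ℝ) ≤
      (IqE q).card := by exact_mod_cast Finset.card_le_card hsub
  have h3 : R / 2 ≤ (⌊R⌋₊ : ℝ) - ⌊R / Real.exp 1⌋₊ := by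
    have := Nat.lt_floor_add_one R
    have := Nat.floor_le hRe
    linarith
  have hτ : (q.divisors.card : ℝ) ≤ C * x := hCb q (by omega)
  have hτ0 : (0 : ℝ) < q.divisors.card := by
    exact_mod_cast Finset.card_pos.mpr ⟨1, by simp; omega⟩
  have h4 : R / 2 / (C * x) ≤ ((⌊R⌋₊ : ℝ) - ⌊R / Real.exp 1⌋₊) / q.divisors.card := by
    gcongr
    linarith [show 0 ≤ R by positivity]
  have h5 : R / x ^ 2 ≤ R / 2 / (C * x) - C * x := by
    have hx3 : 4 * C ^ 2 * x ^ 2 ≤ R := by nlinarith [sq_nonneg x]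
    have h6 : R / x ^ 2 ≤ R / (4 * C * x) := by
      have : 4 * C * x ≤ x ^ 2 := by nlinarith
      gcongr
    have h7 : C * x ≤ R / (4 * C * x) := by
      rw [le_div_iff₀ (by positivity)]; linarith
    have h8 : R / 2 / (C * x) = 2 * (R / (4 * C * x)) := by field_simp; ring
    linarith
  rw [hgoal]
  linarith

lemma eventually_log_lt {c δ : ℝ} (hc : 0 < c) (hδ : 0 < δ) :
    ∀ᶠ q : ℕ in Filter.atTop, 8 * Real.log q < c * (q : ℝ) ^ δ := by
  have h := ((isLittleO_log_rpow_atTop hδ).bound (show 0 < c / 16 by positivity))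
  filter_upwards [tendsto_natCast_atTop_atTop.eventually h, Filter.eventually_gt_atTop 1]
    with q hq hq1
  have hqr : (1 : ℝ) < q := by exact_mod_cast hq1
  rw [Real.norm_of_nonneg (Real.log_nonneg hqr.le), Real.norm_of_nonneg (by positivity)] at hq
  have : 0 < c * (q : ℝ) ^ δ := by positivity
  linarith

/-- **Reduction to bounding `S` (Easy set-up).** If for some `B₂, B₃` and signs with
`Δ₁Δ₂Δ₃ = Δ` the quantity `S^{Δ̄}_{B₂,B₃}(a)` is `≥ c/(q^(1+ε/100) log q)`, then
`a ∈ E_h^Δ(q^(2+ε))`. -/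
theorem reduction_to_S :
    ∃ ε₀ : ℝ, 0 < ε₀ ∧
      ∀ ε : ℝ, 0 < ε → ε < ε₀ →
        ∀ c : ℝ, 0 < c →
          ∃ q₀ : ℕ,
            ∀ q : ℕ, q₀ ≤ q →
              ∀ h : ℕ → ℝ, IsMultFn h → (∀ n : ℕ, h n ≠ 0) →
                ∀ Δ : ℝ, (Δ = 1 ∨ Δ = -1) →
                  ∀ a : (ZMod q)ˣ,
                    (∃ (B₂ B₃ : Set ((ZMod q)ˣ)) (Δ₁ Δ₂ Δ₃ : ℝ),
                      (Δ₁ = 1 ∨ Δ₁ = -1) ∧ (Δ₂ = 1 ∨ Δ₂ = -1) ∧ (Δ₃ = 1 ∨ Δ₃ = -1) ∧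
                      Δ₁ * Δ₂ * Δ₃ = Δ ∧
                      c / ((q : ℝ) ^ (1 + ε / 100) * Real.log q) ≤
                        SE q ε h B₂ B₃ Δ₁ Δ₂ Δ₃ a) →
                    a ∈ EhSet q h Δ ((q : ℝ) ^ (2 + ε)) := by
  refine ⟨1 / 2, by norm_num, fun ε hε hε' c hc => ?_⟩
  -- Each of the three subpolynomial quantities is allowed to lose a factor `q ^ (ε / 100)`.
  have hδ : 0 < ε / 100 := by positivity
  have hev := (eventually_divisors_le hδ).and ((eventually_mertensFactor_le (ε := ε)
    (by linarith) hδ).and ((eventually_card_IqE_ge hδ (by linarith)).and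
    ((eventually_log_lt hc hδ).and (Filter.eventually_gt_atTop 1))))
  obtain ⟨q₀, hq₀⟩ := Filter.eventually_atTop.mp hev
  refine ⟨q₀, fun q hq h hm _ Δ _ a => ?_⟩
  obtain ⟨hdiv, hmer, hI, hlog, hq1⟩ := hq₀ q hq
  rintro ⟨B₂, B₃, Δ₁, Δ₂, Δ₃, hΔ₁, -, -, rfl, hS⟩
  by_contra ha
  have hqr : (1 : ℝ) < q := by exact_mod_cast hq1
  have hq0 : (0 : ℝ) < q := by linarith
  set δ := ε / 100 with hδdef
  have hX : (q : ℝ) ^ (2 + ε) ≤ (q : ℝ) ^ (3 : ℝ) :=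
    Real.rpow_le_rpow_of_exponent_le hqr.le (by linarith)
  have hconv := conv5Sum_le hq1 hε hε'.le hm B₂ B₃ hΔ₁ ha
    (fun m hm0 hmX => hdiv m hm0 (hmX.trans hX)) hmer
  have hbad : ((badSet q a ((q : ℝ) ^ (2 + ε)) ((q : ℝ) ^ ε / Real.exp 1)
      ((q : ℝ) ^ ((1 : ℝ) / 2))).card : ℝ) ≤ 8 * q := by
    refine (card_badSet_le q hq1 a (by positivity) (by positivity) (by positivity)).trans ?_
    have e1 : (q : ℝ) ^ (2 + ε) / q * (2 / ((q : ℝ) ^ ε / Real.exp 1)) =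
        2 * Real.exp 1 * q := by
      have : (q : ℝ) ^ (2 + ε) = q ^ 2 * (q : ℝ) ^ ε := by
        rw [Real.rpow_add hq0, Real.rpow_two]
      rw [this]
      have : (q : ℝ) ^ ε ≠ 0 := by positivity
      field_simp
    have e2 : (q : ℝ) ^ ((1 : ℝ) / 2) ≤ q := by
      conv_rhs => rw [← Real.rpow_one (q : ℝ)]
      exact Real.rpow_le_rpow_of_exponent_le hqr.le (by norm_num)
    have := Real.exp_one_lt_d9
    rw [e1]
    nlinarith
  have hIpos : 0 < (q : ℝ) ^ ((1 : ℝ) / 2 - δ) := by positivity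
  have hSE : SE q ε h B₂ B₃ Δ₁ Δ₂ Δ₃ a ≤
      1 / (((q : ℝ) ^ ((1 : ℝ) / 2 - δ)) ^ 3 * (q : ℝ) ^ ε * (q : ℝ) ^ ((1 : ℝ) / 2)) *
        (8 * q * ((q : ℝ) ^ δ) ^ 5 * ((q : ℝ) ^ δ) ^ 3) := by
    unfold SE
    have h1 : _ ≤ 8 * q * ((q : ℝ) ^ δ) ^ 5 * ((q : ℝ) ^ δ) ^ 3 := hconv.trans (by gcongr)
    refine (mul_le_mul_of_nonneg_left h1 (by positivity)).trans ?_
    gcongr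
  have hexp : 1 / (((q : ℝ) ^ ((1 : ℝ) / 2 - δ)) ^ 3 * (q : ℝ) ^ ε * (q : ℝ) ^ ((1 : ℝ) / 2)) *
        (8 * q * ((q : ℝ) ^ δ) ^ 5 * ((q : ℝ) ^ δ) ^ 3) = 8 * (q : ℝ) ^ (-1 - 89 * δ) := by
    have h1 : 8 * (q : ℝ) * ((q : ℝ) ^ δ) ^ 5 * ((q : ℝ) ^ δ) ^ 3 =
        8 * (q : ℝ) ^ (1 + 8 * δ) := by
      have : (q : ℝ) ^ (1 + 8 * δ) = q * ((q : ℝ) ^ δ) ^ 8 := by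
        rw [Real.rpow_add hq0, Real.rpow_one, ← Real.rpow_natCast, ← Real.rpow_mul hq0.le]
        congr 2; push_cast; ring
      rw [this]; ring
    have h2 : ((q : ℝ) ^ ((1 : ℝ) / 2 - δ)) ^ 3 * (q : ℝ) ^ ε * (q : ℝ) ^ ((1 : ℝ) / 2) =
        (q : ℝ) ^ (2 + 97 * δ) := by
      rw [← Real.rpow_natCast, ← Real.rpow_mul hq0.le, ← Real.rpow_add hq0,
        ← Real.rpow_add hq0]
      congr 1; push_cast; rw [hδdef]; ring
    rw [h1, h2, one_div, ← Real.rpow_neg hq0.le, mul_left_comm, ← Real.rpow_add hq0]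
    congr 2; ring
  have hfin := hS.trans (hSE.trans_eq hexp)
  have hlogpos : 0 < Real.log q := Real.log_pos hqr
  rw [div_le_iff₀ (by positivity)] at hfin
  have h3 : 8 * (q : ℝ) ^ (-1 - 89 * δ) * ((q : ℝ) ^ (1 + δ) * Real.log q) =
      8 * Real.log q * (q : ℝ) ^ (-(88 * δ)) := by
    have : (q : ℝ) ^ (-(88 * δ)) = (q : ℝ) ^ (-1 - 89 * δ) * (q : ℝ) ^ (1 + δ) := by
      rw [← Real.rpow_add hq0]; congr 1; ring
    rw [this]; ring
  rw [h3] at hfin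
  have h4 : (q : ℝ) ^ (-(88 * δ)) ≤ (q : ℝ) ^ (-δ) :=
    Real.rpow_le_rpow_of_exponent_le hqr.le (by linarith)
  have h5 : (q : ℝ) ^ δ * (q : ℝ) ^ (-δ) = 1 := by
    rw [← Real.rpow_add hq0]; simp
  have h6 : 0 < (q : ℝ) ^ (-δ) := by positivity
  have h7 : c < c := by
    calc c ≤ 8 * Real.log q * (q : ℝ) ^ (-(88 * δ)) := hfin
      _ ≤ 8 * Real.log q * (q : ℝ) ^ (-δ) := by gcongr
      _ < c * (q : ℝ) ^ δ * (q : ℝ) ^ (-δ) := by gcongr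
      _ = c := by rw [mul_assoc, h5, mul_one]
  exact lt_irrefl c h7
end
end
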